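/- arXiv:2001.04676 — 3 statements merged into one kernel-verified Lean document; each statement's English description precedes it below -/
import Mathlib

section
/- Suppose there exists s ≥ 2 such that E[u(X, Z_1)^s] < ∞ and sup_{x,z} ‖g(x, z)/u(x, z)‖_∞ < ∞. Then there exists a constant c > 0 such that for every ℓ ≥ 1 the coupled level-ℓ gradient correction satisfies E[‖∇Δ_ℓ − E[∇Δ_ℓ]‖_2²] ≤ c·2^{−βℓ}, where β = min(s/2, 2). -/
open MeasureTheory ProbabilityTheory Finset
open scoped ENNReal

noncomputable section

/-- Expectation (possibly vector-valued) of a functional `f` of a data point `x ~ ν`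
together with `n` samples drawn i.i.d. (conditionally on `x`) from the proposal kernel
`q`. -/
def jointExp {𝒳 𝒵 : Type*} [MeasurableSpace 𝒳] [MeasurableSpace 𝒵]
    {E : Type*} [NormedAddCommGroup E] [NormedSpace ℝ E]
    (ν : Measure 𝒳) (q : Kernel 𝒳 𝒵) (n : ℕ) (f : 𝒳 → (Fin n → 𝒵) → E) : E :=
  ∫ x, ∫ zs, f x zs ∂(Measure.pi fun _ : Fin n => q x) ∂ν

/-- The self-normalized (ratio) gradient estimator
`Ĝ = (∑ₖ g(x, zₖ)) / (∑ₖ u(x, zₖ))`. -/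
def ratioEstimator {𝒳 𝒵 E : Type*} [AddCommGroup E] [Module ℝ E]
    (u : 𝒳 → 𝒵 → ℝ) (g : 𝒳 → 𝒵 → E) {n : ℕ} (x : 𝒳) (zs : Fin n → 𝒵) : E :=
  (∑ k, u x (zs k))⁻¹ • ∑ k, g x (zs k)

/-- The coupled level gradient correction
`∇Δ = Ĝ_{2n} − ½(Ĝₙ⁽ᵃ⁾ + Ĝₙ⁽ᵇ⁾)`, where the ratio estimators are formed from all `2n`
samples, the first `n` samples and the last `n` samples respectively. -/
def gradCorrection {𝒳 𝒵 E : Type*} [AddCommGroup E] [Module ℝ E]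
    (u : 𝒳 → 𝒵 → ℝ) (g : 𝒳 → 𝒵 → E) (n : ℕ) (x : 𝒳) (zs : Fin (2 * n) → 𝒵) : E :=
  ratioEstimator u g x zs
    - (2 : ℝ)⁻¹ • (ratioEstimator u g x (fun k : Fin n => zs ⟨k.1, by have := k.2; omega⟩)
        + ratioEstimator u g x (fun k : Fin n => zs ⟨n + k.1, by have := k.2; omega⟩))

lemma aux_rpow_le (t r p : ℝ) (ht : 0 ≤ t) (hr : 0 ≤ r) (hrp : r ≤ p) : t ^ r ≤ 1 + t ^ p := by
  rcases le_total t 1 with h | h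
  · have h1 := Real.rpow_le_one ht h hr
    have h2 := Real.rpow_nonneg ht p
    linarith
  · have h1 := Real.rpow_le_rpow_of_exponent_le h hrp
    linarith

lemma aux_pw_one (p t : ℝ) (hp : 2 ≤ p) (hp4 : p ≤ 4) :
    |1 + t| ^ p ≤ 1 + p * t + 16 * (t ^ 2 + |t| ^ p) := by
  rcases le_total |t| 1 with h | h
  · have hy : 0 ≤ 1 + (2 * t + t ^ 2) := by nlinarith [sq_nonneg (1 + t)]
    have e1 : |1 + t| ^ p = (1 + (2 * t + t ^ 2)) * (1 + (2 * t + t ^ 2)) ^ (p / 2 - 1) := by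
      have : 1 + (2 * t + t ^ 2) = |1 + t| ^ (2 : ℝ) := by
        rw [Real.rpow_two, sq_abs]; ring
      rw [this, ← Real.rpow_mul (abs_nonneg _)]
      rcases eq_or_ne (|1 + t|) 0 with h0 | h0
      · rw [h0, Real.zero_rpow (by linarith), Real.zero_rpow (by norm_num)]; simp
      · rw [← Real.rpow_add (lt_of_le_of_ne (abs_nonneg _) h0.symm)]
        congr 1; ring
    have e2 := rpow_one_add_le_one_add_mul_self (s := 2 * t + t ^ 2) (by linarith)
      (p := p / 2 - 1) (by linarith) (by linarith)
    have e3 := mul_le_mul_of_nonneg_left e2 hy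
    have e4 := Real.rpow_nonneg (abs_nonneg t) p
    rw [e1]
    refine e3.trans ?_
    obtain ⟨l1, l2⟩ := abs_le.1 h
    have e5 : (2 + t) ^ 2 ≤ 9 := by nlinarith
    have e6 : t ^ 2 * (2 + t) ^ 2 ≤ t ^ 2 * 9 := mul_le_mul_of_nonneg_left e5 (sq_nonneg t)
    have e7 : (p / 2 - 1) * (t ^ 2 * (2 + t) ^ 2) ≤ 1 * (t ^ 2 * 9) :=
      mul_le_mul (by linarith) e6 (by positivity) (by norm_num)
    nlinarith [sq_nonneg t]
  · have h1 : |1 + t| ≤ 2 * |t| := by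
      have := abs_add_le 1 t
      rw [abs_one] at this; linarith
    have h2 : |1 + t| ^ p ≤ (2 * |t|) ^ p := Real.rpow_le_rpow (abs_nonneg _) h1 (by linarith)
    rw [Real.mul_rpow (by norm_num) (abs_nonneg _)] at h2
    have h3 : (2 : ℝ) ^ p ≤ 16 := by
      have := Real.rpow_le_rpow_of_exponent_le (x := 2) (by norm_num) hp4
      norm_num at this; exact this
    have h4 := Real.rpow_nonneg (abs_nonneg t) p
    have h5 : (2 : ℝ) ^ p * |t| ^ p ≤ 16 * |t| ^ p := mul_le_mul_of_nonneg_right h3 h4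
    have h6 : |t| ≤ t ^ 2 := by rw [← sq_abs]; nlinarith
    have h7 : -(4 * |t|) ≤ p * t := by
      have := neg_abs_le (p * t)
      rw [abs_mul, abs_of_nonneg (by linarith : (0:ℝ) ≤ p)] at this
      nlinarith [abs_nonneg t]
    nlinarith [sq_nonneg t]

lemma aux_pw (p a b : ℝ) (hp : 2 ≤ p) (hp4 : p ≤ 4) :
    |a + b| ^ p ≤ |a| ^ p + p * ((|a| ^ (p - 2) * a) * b)
      + 16 * (|a| ^ (p - 2) * b ^ 2 + |b| ^ p) := by
  rcases eq_or_ne a 0 with rfl | ha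
  · have h1 := Real.rpow_nonneg (abs_nonneg b) p
    have h2 := Real.rpow_nonneg (abs_nonneg (0:ℝ)) (p - 2)
    have h3 := Real.rpow_nonneg (abs_nonneg (0:ℝ)) p
    have h4 : 0 ≤ |(0:ℝ)| ^ (p - 2) * b ^ 2 := by positivity
    simp only [zero_add, mul_zero, zero_mul]
    linarith
  · have ha' : 0 < |a| := abs_pos.2 ha
    have h := aux_pw_one p (b / a) hp hp4
    have h1 := mul_le_mul_of_nonneg_left h (Real.rpow_nonneg (abs_nonneg a) p)
    have e1 : |a| ^ p * |1 + b / a| ^ p = |a + b| ^ p := by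
      rw [← Real.mul_rpow (abs_nonneg _) (abs_nonneg _), ← abs_mul]
      congr 2; field_simp
    have e2 : |a| ^ p = |a| ^ (p - 2) * a ^ 2 := by
      rw [← sq_abs a, ← Real.rpow_two, ← Real.rpow_add ha']; congr 1; ring
    have e3 : |a| ^ p * |b / a| ^ p = |b| ^ p := by
      rw [← Real.mul_rpow (abs_nonneg _) (abs_nonneg _), ← abs_mul]
      congr 2; field_simp
    have e4 : |a| ^ p * (b / a) = |a| ^ (p - 2) * a * b := by rw [e2]; field_simp
    have e5 : |a| ^ p * (b / a) ^ 2 = |a| ^ (p - 2) * b ^ 2 := by rw [e2]; field_simp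
    rw [e1] at h1
    refine h1.trans (le_of_eq ?_)
    calc _ = |a| ^ p + p * (|a| ^ p * (b / a)) + 16 * (|a| ^ p * (b / a) ^ 2
          + |a| ^ p * |b / a| ^ p) := by ring
      _ = _ := by rw [e3, e4, e5]

lemma aux_int {Ω : Type*} [MeasurableSpace Ω] {P : Measure Ω} [IsProbabilityMeasure P]
    {f g : Ω → ℝ} {p : ℝ} (hf : Integrable (fun ω => |f ω| ^ p) P) (hg : Measurable g)
    (h : ∀ ω, |g ω| ≤ 1 + |f ω| ^ p) : Integrable g P :=
  Integrable.mono' ((integrable_const 1).add hf) hg.aestronglyMeasurable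
    (Filter.Eventually.of_forall fun ω => by simpa using h ω)

lemma aux_mz {Ω ι : Type*} [MeasurableSpace Ω] {P : Measure Ω} [IsProbabilityMeasure P]
    (p : ℝ) (hp : 2 ≤ p) (hp4 : p ≤ 4) (Y : ι → Ω → ℝ) (hind : iIndepFun Y P)
    (hm : ∀ i, Measurable (Y i)) (hi : ∀ i, Integrable (fun ω => |Y i ω| ^ p) P)
    (h0 : ∀ i, ∫ ω, Y i ω ∂P = 0) (h1 : ∀ i, ∫ ω, |Y i ω| ^ p ∂P ≤ 1) (S : Finset ι) :
    Integrable (fun ω => |∑ i ∈ S, Y i ω| ^ p) P ∧ ∫ ω, (∑ i ∈ S, Y i ω) ^ 2 ∂P ≤ 2 * (#S : ℝ)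
      ∧ ∫ ω, |∑ i ∈ S, Y i ω| ^ p ∂P ≤ 112 * (#S : ℝ) ^ (p / 2) := by
  classical
  induction S using Finset.induction_on with
  | empty =>
    have hpz : (0:ℝ) ^ p = 0 := Real.zero_rpow (by linarith)
    have hpz2 : (0:ℝ) ^ (p / 2) = 0 := Real.zero_rpow (by linarith)
    simp [hpz, hpz2]
  | insert j S hj ih =>
    obtain ⟨ihI, ih2, ihp⟩ := ih
    set T : Ω → ℝ := fun ω => ∑ i ∈ S, Y i ω with hT
    have hTm : Measurable T := Finset.measurable_sum _ fun i _ => hm i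
    have hTY : IndepFun T (Y j) P := by
      have := hind.indepFun_finsetSum_of_notMem hm hj
      convert this using 1
      ext ω; simp [hT]
    have hsum : ∀ ω, ∑ i ∈ insert j S, Y i ω = T ω + Y j ω := fun ω => by
      rw [Finset.sum_insert hj, add_comm]
    simp only [hsum]
    rw [Finset.card_insert_of_notMem hj]
    push_cast
    set k : ℝ := (#S : ℝ) with hk
    have hk0 : 0 ≤ k := Nat.cast_nonneg _
    -- integrability
    have key1 : ∀ y : ℝ, |y| ≤ 1 + |y| ^ p := fun y => by
      simpa using aux_rpow_le |y| 1 p (abs_nonneg _) (by norm_num) (by linarith)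
    have key2 : ∀ y : ℝ, y ^ 2 ≤ 1 + |y| ^ p := fun y => by
      simpa using aux_rpow_le |y| 2 p (abs_nonneg _) (by norm_num) (by linarith)
    have IT1 : Integrable T P := aux_int ihI hTm fun ω => key1 _
    have IT2 : Integrable (fun ω => T ω ^ 2) P := aux_int ihI (hTm.pow_const 2) fun ω => by
      rw [abs_of_nonneg (sq_nonneg _)]; exact key2 _
    have IY1 : Integrable (Y j) P := aux_int (hi j) (hm j) fun ω => key1 _
    have IY2 : Integrable (fun ω => Y j ω ^ 2) P := aux_int (hi j) ((hm j).pow_const 2) fun ω => by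
      rw [abs_of_nonneg (sq_nonneg _)]; exact key2 _
    have mA : Measurable (fun y : ℝ => |y| ^ (p - 2)) := (measurable_norm (α := ℝ)).pow_const _
    have mB : Measurable (fun y : ℝ => |y| ^ (p - 2) * y) := mA.mul measurable_id
    have mC : Measurable (fun y : ℝ => y ^ 2) := measurable_id.pow_const 2
    have IA : Integrable (fun ω => |T ω| ^ (p - 2)) P := aux_int ihI (mA.comp hTm) fun ω => by
      rw [abs_of_nonneg (by positivity)]
      exact aux_rpow_le _ _ _ (abs_nonneg _) (by linarith) (by linarith)
    have IB : Integrable (fun ω => |T ω| ^ (p - 2) * T ω) P :=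
      aux_int ihI (mB.comp hTm) fun ω => by
        have e : |(|T ω| ^ (p - 2) * T ω)| = |T ω| ^ (p - 1) := by
          rw [abs_mul, abs_of_nonneg (by positivity : 0 ≤ |T ω| ^ (p - 2))]
          rcases eq_or_ne (|T ω|) 0 with h0 | h0
          · rw [h0, mul_zero, Real.zero_rpow (by linarith)]
          · nth_rewrite 2 [← Real.rpow_one |T ω|]
            rw [← Real.rpow_add (lt_of_le_of_ne (abs_nonneg _) h0.symm)]
            congr 1; ring
        rw [e]
        exact aux_rpow_le _ _ _ (abs_nonneg _) (by linarith) (by linarith)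
    have indB : IndepFun (fun ω => |T ω| ^ (p - 2) * T ω) (Y j) P := hTY.comp mB measurable_id
    have indA : IndepFun (fun ω => |T ω| ^ (p - 2)) (fun ω => Y j ω ^ 2) P := hTY.comp mA mC
    have IBY : Integrable (fun ω => (|T ω| ^ (p - 2) * T ω) * Y j ω) P :=
      indB.integrable_mul IB IY1
    have IAY : Integrable (fun ω => |T ω| ^ (p - 2) * Y j ω ^ 2) P := indA.integrable_mul IA IY2
    have ITY : Integrable (fun ω => T ω * Y j ω) P := hTY.integrable_mul IT1 IY1
    have EBY : ∫ ω, (|T ω| ^ (p - 2) * T ω) * Y j ω ∂P = 0 := by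
      rw [indB.integral_fun_mul_eq_mul_integral IB.1 IY1.1, h0, mul_zero]
    have ETY : ∫ ω, T ω * Y j ω ∂P = 0 := by
      rw [hTY.integral_fun_mul_eq_mul_integral IT1.1 IY1.1, h0, mul_zero]
    have EAY : ∫ ω, |T ω| ^ (p - 2) * Y j ω ^ 2 ∂P
        = (∫ ω, |T ω| ^ (p - 2) ∂P) * ∫ ω, Y j ω ^ 2 ∂P :=
      indA.integral_fun_mul_eq_mul_integral IA.1 IY2.1
    have EY2 : ∫ ω, Y j ω ^ 2 ∂P ≤ 2 := by
      calc ∫ ω, Y j ω ^ 2 ∂P ≤ ∫ ω, (1 + |Y j ω| ^ p) ∂P :=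
            integral_mono IY2 ((integrable_const 1).add (hi j)) fun ω => key2 _
        _ = 1 + ∫ ω, |Y j ω| ^ p ∂P := by
            rw [integral_add (integrable_const 1) (hi j)]; simp
        _ ≤ 2 := by linarith [h1 j]
    have EA : ∫ ω, |T ω| ^ (p - 2) ∂P ≤ 3 * (k + 1) ^ (p / 2 - 1) := by
      have hpt : ∀ ω, |T ω| ^ (p - 2) ≤ (k + 1) ^ (p / 2 - 1) * (1 + T ω ^ 2 / (k + 1)) := by
        intro ω
        have hq : 0 ≤ T ω ^ 2 / (k + 1) := by positivity
        have := aux_rpow_le (T ω ^ 2 / (k + 1)) (p / 2 - 1) 1 hq (by linarith) (by linarith)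
        rw [Real.rpow_one] at this
        have h2 := mul_le_mul_of_nonneg_left this
          (Real.rpow_nonneg (by linarith : 0 ≤ k + 1) (p / 2 - 1))
        refine le_trans (le_of_eq ?_) h2
        rw [← Real.mul_rpow (by linarith) hq, mul_div_cancel₀ _ (by linarith : k + 1 ≠ 0),
          ← sq_abs, ← Real.rpow_two, ← Real.rpow_mul (abs_nonneg _)]
        congr 1; ring
      calc _ ≤ ∫ ω, (k + 1) ^ (p / 2 - 1) * (1 + T ω ^ 2 / (k + 1)) ∂P :=
            integral_mono IA (((integrable_const 1).add (IT2.div_const _)).const_mul _) hpt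
        _ = (k + 1) ^ (p / 2 - 1) * (1 + (∫ ω, T ω ^ 2 ∂P) / (k + 1)) := by
            rw [integral_const_mul, integral_add (integrable_const 1) (IT2.div_const _),
              integral_div]; simp
        _ ≤ (k + 1) ^ (p / 2 - 1) * 3 := by
            gcongr
            have : (∫ ω, T ω ^ 2 ∂P) / (k + 1) ≤ 2 := by
              rw [div_le_iff₀ (by linarith)]; linarith
            linarith
        _ = _ := by ring
    have hK1 : 1 ≤ (k + 1) ^ (p / 2 - 1) := Real.one_le_rpow (by linarith) (by linarith)
    have IR : Integrable (fun ω => |T ω| ^ p + p * ((|T ω| ^ (p - 2) * T ω) * Y j ω)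
      + 16 * (|T ω| ^ (p - 2) * Y j ω ^ 2 + |Y j ω| ^ p)) P :=
      (ihI.add (IBY.const_mul p)).add ((IAY.add (hi j)).const_mul 16)
    have hpt := fun ω => aux_pw p (T ω) (Y j ω) hp hp4
    have IL : Integrable (fun ω => |T ω + Y j ω| ^ p) P := by
      refine IR.mono' ?_ (Filter.Eventually.of_forall fun ω => ?_)
      · exact ((measurable_norm (α := ℝ)).pow_const p).comp (hTm.add (hm j)) |>.aestronglyMeasurable
      · rw [Real.norm_of_nonneg (by positivity)]; exact hpt ω
    refine ⟨IL, ?_, ?_⟩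
    · have : ∫ ω, (T ω + Y j ω) ^ 2 ∂P = ∫ ω, (T ω ^ 2 + 2 * (T ω * Y j ω) + Y j ω ^ 2) ∂P := by
        congr 1; ext ω; ring
      have I2 : Integrable (fun ω => T ω ^ 2 + 2 * (T ω * Y j ω)) P := IT2.add (ITY.const_mul 2)
      rw [this, integral_add I2 IY2,
        integral_add IT2 (ITY.const_mul 2), integral_const_mul, ETY]
      linarith
    · have h2 := integral_mono IL IR hpt
      have ihI' : Integrable (fun ω => |T ω| ^ p) P := ihI
      have I2 : Integrable (fun ω => |T ω| ^ p + p * ((|T ω| ^ (p - 2) * T ω) * Y j ω)) P :=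
        ihI.add (IBY.const_mul p)
      have I3 : Integrable (fun ω => 16 * (|T ω| ^ (p - 2) * Y j ω ^ 2 + |Y j ω| ^ p)) P :=
        (IAY.add (hi j)).const_mul 16
      rw [integral_add I2 I3,
        integral_add ihI' (IBY.const_mul p), integral_const_mul, integral_const_mul,
        integral_add IAY (hi j), EBY, EAY] at h2
      have h3 : (∫ ω, |T ω| ^ (p - 2) ∂P) * ∫ ω, Y j ω ^ 2 ∂P ≤ 3 * (k + 1) ^ (p / 2 - 1) * 2 :=
        mul_le_mul EA EY2 (integral_nonneg fun ω => sq_nonneg _) (by positivity)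
      have h4 : k ^ (p / 2) ≤ k * (k + 1) ^ (p / 2 - 1) := by
        rcases eq_or_lt_of_le hk0 with h0 | h0
        · rw [← h0, Real.zero_rpow (by linarith)]; simp
        · have : k ^ (p / 2) = k * k ^ (p / 2 - 1) := by
            nth_rewrite 2 [← Real.rpow_one k]
            rw [← Real.rpow_add h0]; congr 1; ring
          rw [this]
          gcongr
          · linarith
          · linarith
      have h5 : (k + 1) ^ (p / 2) = (k + 1) * (k + 1) ^ (p / 2 - 1) := by
        nth_rewrite 2 [← Real.rpow_one (k + 1)]
        rw [← Real.rpow_add (by linarith)]; congr 1; ring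
      rw [h5]
      have ihp' : ∫ ω, |T ω| ^ p ∂P ≤ 112 * k ^ (p / 2) := ihp
      nlinarith [h1 j]

lemma aux_mean {𝒵 : Type*} [MeasurableSpace 𝒵] (μ : Measure 𝒵) [IsProbabilityMeasure μ]
    (p : ℝ) (hp : 2 ≤ p) (hp4 : p ≤ 4) (f : 𝒵 → ℝ) (hf : Measurable f)
    (h0 : ∫ z, f z ∂μ = 0) (hi : Integrable (fun z => |f z| ^ p) μ) (M : ℝ) (hM : 0 < M)
    (h1 : ∫ z, |f z| ^ p ∂μ ≤ M) (n N : ℕ) (hn : 1 ≤ n) (e : Fin n → Fin N)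
    (he : Function.Injective e) :
    Integrable (fun zs : Fin N → 𝒵 => |(n : ℝ)⁻¹ * ∑ k, f (zs (e k))| ^ p)
        (Measure.pi fun _ : Fin N => μ) ∧
      ∫ zs, |(n : ℝ)⁻¹ * ∑ k, f (zs (e k))| ^ p ∂(Measure.pi fun _ : Fin N => μ)
        ≤ 112 * M * (n : ℝ) ^ (-(p / 2)) := by
  set L : ℝ := M ^ (1 / p) with hL
  have hL0 : 0 < L := Real.rpow_pos_of_pos hM _
  have hLp : L ^ p = M := by
    rw [hL, ← Real.rpow_mul hM.le, one_div_mul_cancel (by linarith), Real.rpow_one]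
  have hn0 : (0:ℝ) < n := by exact_mod_cast hn
  have hinv : ∀ y : ℝ, |L⁻¹ * y| ^ p = M⁻¹ * |y| ^ p := fun y => by
    rw [abs_mul, Real.mul_rpow (abs_nonneg _) (abs_nonneg _), abs_of_pos (inv_pos.2 hL0),
      Real.inv_rpow hL0.le, hLp]
  have mp : ∀ i : Fin N, MeasurePreserving (Function.eval i) (Measure.pi fun _ : Fin N => μ) μ :=
    fun i => measurePreserving_eval (fun _ => μ) i
  have mpow : Measurable (fun z => |f z| ^ p) := ((measurable_norm (α := ℝ)).pow_const p).comp hf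
  have cint : ∀ (i : Fin N) (F : 𝒵 → ℝ), Measurable F →
      ∫ zs, F (zs i) ∂(Measure.pi fun _ : Fin N => μ) = ∫ z, F z ∂μ := fun i F hF => by
    conv_rhs => rw [← (mp i).map_eq]
    rw [integral_map (mp i).measurable.aemeasurable hF.aestronglyMeasurable]
  obtain ⟨r1, -, r3⟩ := aux_mz (P := Measure.pi fun _ : Fin N => μ) p hp hp4
    (fun (k : Fin n) zs => L⁻¹ * f (zs (e k)))
    (iIndepFun.precomp he (iIndepFun_pi (μ := fun _ : Fin N => μ)
      (X := fun _ z => L⁻¹ * f z) fun i => (hf.const_mul _).aemeasurable))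
    (fun k => (hf.comp (measurable_pi_apply _)).const_mul _)
    (fun k => by
      simp only [hinv]
      exact ((mp (e k)).integrable_comp_of_integrable hi).const_mul _)
    (fun k => by
      rw [integral_const_mul, cint _ f hf, h0, mul_zero])
    (fun k => by
      simp only [hinv]
      rw [integral_const_mul, cint _ _ mpow]
      rw [inv_mul_le_iff₀ hM]; linarith) Finset.univ
  have hrew : ∀ zs : Fin N → 𝒵, |(n : ℝ)⁻¹ * ∑ k, f (zs (e k))| ^ p
      = (M * (n : ℝ) ^ (-p)) * |∑ k, L⁻¹ * f (zs (e k))| ^ p := fun zs => by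
    rw [← Finset.mul_sum, hinv, abs_mul, Real.mul_rpow (abs_nonneg _) (abs_nonneg _),
      abs_of_pos (inv_pos.2 hn0), Real.inv_rpow hn0.le, ← Real.rpow_neg hn0.le]
    field_simp
  simp only [hrew]
  refine ⟨r1.const_mul _, ?_⟩
  rw [integral_const_mul]
  calc _ ≤ (M * (n : ℝ) ^ (-p)) * (112 * (n : ℝ) ^ (p / 2)) := by
        gcongr
        simpa using r3
    _ = 112 * M * ((n : ℝ) ^ (-p) * (n : ℝ) ^ (p / 2)) := by ring
    _ = _ := by rw [← Real.rpow_add hn0]; congr 2; ring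

lemma aux_ratio (p C A B a b γ : ℝ) (hp : 2 ≤ p) (hp4 : p ≤ 4) (hC : 1 ≤ C) (hA : 0 < A)
    (hB : 0 < B) (ha : |a| ≤ C * A) (hb : |b| ≤ C * B) :
    ((a + b) / (A + B) - 2⁻¹ * (a / A + b / B)) ^ 2 ≤
      16 * C ^ 2 * (|A - 1| ^ p + |B - 1| ^ p + |a - γ * A| ^ p + |b - γ * B| ^ p) := by
  set δ := (a + b) / (A + B) - 2⁻¹ * (a / A + b / B) with hδ
  have hAB : 0 < A + B := by linarith
  have d1 : δ = (A - B) / (A + B) * (2⁻¹ * (a / A - b / B)) := by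
    rw [hδ]; field_simp; ring
  have d2 : a / A - b / B = (a - γ * A) / A - (b - γ * B) / B := by field_simp; ring
  have q1 : |(A - B) / (A + B)| ≤ 1 := by
    rw [abs_div, abs_of_pos hAB, div_le_one hAB, abs_le]; constructor <;> linarith
  have q2 : |2⁻¹ * (a / A - b / B)| ≤ C := by
    have e1 : |a / A| ≤ C := by rw [abs_div, abs_of_pos hA, div_le_iff₀ hA]; exact ha
    have e2 : |b / B| ≤ C := by rw [abs_div, abs_of_pos hB, div_le_iff₀ hB]; exact hb
    rw [abs_le] at *; constructor <;> linarith
  have q3 : |δ| ≤ C := by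
    rw [d1, abs_mul]
    calc _ ≤ 1 * C := mul_le_mul q1 q2 (abs_nonneg _) (by norm_num)
      _ = C := one_mul C
  have q4 : δ ^ 2 ≤ C ^ 2 := by
    rw [← sq_abs]; exact pow_le_pow_left₀ (abs_nonneg _) q3 2
  obtain ⟨m, hm0, h1, h2, h3, h4, hmp⟩ : ∃ m : ℝ, 0 ≤ m ∧ |A - 1| ≤ m ∧ |B - 1| ≤ m ∧
      |a - γ * A| ≤ m ∧ |b - γ * B| ≤ m ∧
      m ^ p ≤ |A - 1| ^ p + |B - 1| ^ p + |a - γ * A| ^ p + |b - γ * B| ^ p := by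
    refine ⟨max (max |A - 1| |B - 1|) (max |a - γ * A| |b - γ * B|), by positivity,
      by simp, by simp, by simp, by simp, ?_⟩
    have n1 := Real.rpow_nonneg (abs_nonneg (A - 1)) p
    have n2 := Real.rpow_nonneg (abs_nonneg (B - 1)) p
    have n3 := Real.rpow_nonneg (abs_nonneg (a - γ * A)) p
    have n4 := Real.rpow_nonneg (abs_nonneg (b - γ * B)) p
    rcases max_choice (max |A - 1| |B - 1|) (max |a - γ * A| |b - γ * B|) with h | h <;> rw [h]
    · rcases max_choice |A - 1| |B - 1| with h | h <;> rw [h] <;> linarith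
    · rcases max_choice |a - γ * A| |b - γ * B| with h | h <;> rw [h] <;> linarith
  refine le_trans ?_ (mul_le_mul_of_nonneg_left hmp (by positivity))
  have hC2 : 1 ≤ C ^ 2 := one_le_pow₀ hC
  rcases le_or_gt m (1 / 2) with hm | hm
  · have s1 : |δ| ≤ 4 * m ^ 2 := by
      obtain ⟨l1, l2⟩ := abs_le.1 h1
      obtain ⟨l3, l4⟩ := abs_le.1 h2
      have e1 : |(A - B) / (A + B)| ≤ 2 * m := by
        rw [abs_div, abs_of_pos hAB, div_le_iff₀ hAB]
        have : |A - B| ≤ 2 * m := by rw [abs_le]; constructor <;> linarith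
        nlinarith
      have e2 : |(a - γ * A) / A| ≤ 2 * m := by
        rw [abs_div, abs_of_pos hA, div_le_iff₀ hA]; nlinarith
      have e3 : |(b - γ * B) / B| ≤ 2 * m := by
        rw [abs_div, abs_of_pos hB, div_le_iff₀ hB]; nlinarith
      have e4 : |2⁻¹ * (a / A - b / B)| ≤ 2 * m := by
        rw [d2]; rw [abs_le] at e2 e3 ⊢; constructor <;> linarith
      rw [d1, abs_mul]
      calc _ ≤ (2 * m) * (2 * m) := mul_le_mul e1 e4 (abs_nonneg _) (by linarith)
        _ = _ := by ring
    have s2 : m ^ 4 ≤ m ^ p := by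
      rcases eq_or_lt_of_le hm0 with h | h
      · rw [← h, Real.zero_rpow (by linarith)]; norm_num
      · have := Real.rpow_le_rpow_of_exponent_ge h (by linarith) hp4
        norm_cast at this
    have s3 : δ ^ 2 ≤ (4 * m ^ 2) ^ 2 := by
      rw [← sq_abs]; exact pow_le_pow_left₀ (abs_nonneg _) s1 2
    have s4 := Real.rpow_nonneg hm0 p
    have s5 : 1 * m ^ p ≤ C ^ 2 * m ^ p := mul_le_mul_of_nonneg_right hC2 s4
    have s6 : (4 * m ^ 2) ^ 2 = 16 * m ^ 4 := by ring
    linarith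
  · have s1 : (1 / 2 : ℝ) ^ p ≤ m ^ p := Real.rpow_le_rpow (by norm_num) hm.le (by linarith)
    have s2 : (1 / 2 : ℝ) ^ (4:ℝ) ≤ (1 / 2 : ℝ) ^ p :=
      Real.rpow_le_rpow_of_exponent_ge (by norm_num) (by norm_num) hp4
    have s3 : (1 / 2 : ℝ) ^ (4:ℝ) = 1 / 16 := by
      rw [show (4:ℝ) = ((4:ℕ):ℝ) by norm_num, Real.rpow_natCast]; norm_num
    have s5 : 16 * C ^ 2 * (1 / 16) ≤ 16 * C ^ 2 * m ^ p :=
      mul_le_mul_of_nonneg_left (by linarith) (by positivity)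
    linarith

lemma aux_sum {N n : ℕ} (h : N = n + n) (f : Fin N → ℝ) :
    ∑ k, f k = ∑ k : Fin n, f ⟨k.1, by have := k.2; omega⟩
      + ∑ k : Fin n, f ⟨n + k.1, by have := k.2; omega⟩ := by
  subst h
  rw [Fin.sum_univ_add]
  rfl

lemma aux_scalar {𝒳 𝒵 : Type*} [MeasurableSpace 𝒵] (μ : Measure 𝒵)
    [IsProbabilityMeasure μ] (p : ℝ) (hp : 2 ≤ p) (hp4 : p ≤ 4) (u : 𝒳 → 𝒵 → ℝ) (x : 𝒳)
    (hum : Measurable (u x)) (hu0 : ∀ z, 0 < u x z) (hu1 : ∫ z, u x z ∂μ = 1)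
    (hui : Integrable (fun z => (1 + u x z) ^ p) μ) (h : 𝒳 → 𝒵 → ℝ) (hhm : Measurable (h x))
    (C : ℝ) (hC : 1 ≤ C) (hh : ∀ z, |h x z| ≤ C * u x z) (n : ℕ) (hn : 1 ≤ n) :
    ∃ D : (Fin (2 * n) → 𝒵) → ℝ, Integrable D (Measure.pi fun _ => μ) ∧
      (∀ zs, (gradCorrection u h n x zs) ^ 2 ≤ D zs) ∧
      ∫ zs, D zs ∂(Measure.pi fun _ => μ) ≤
        (16 * C ^ 2 * (224 + 3584 * C ^ 4)) * (∫ z, (1 + u x z) ^ p ∂μ) * (n : ℝ) ^ (-(p / 2)) := by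
  set M := ∫ z, (1 + u x z) ^ p ∂μ with hMdef
  set γ := ∫ z, h x z ∂μ with hγ
  have hn0 : (0:ℝ) < n := by exact_mod_cast hn
  have hM : 1 ≤ M := by
    calc (1:ℝ) = ∫ z, (1:ℝ) ∂μ := by simp
      _ ≤ M := integral_mono (integrable_const 1) hui fun z =>
        Real.one_le_rpow (by linarith [hu0 z]) (by linarith)
  have hu : Integrable (u x) μ := by
    by_contra hc
    rw [integral_undef hc] at hu1; norm_num at hu1
  have hhi : Integrable (h x) μ := (hu.const_mul C).mono' hhm.aestronglyMeasurable
    (Filter.Eventually.of_forall fun z => hh z)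
  have hγC : |γ| ≤ C := by
    calc |γ| ≤ ∫ z, |h x z| ∂μ := abs_integral_le_integral_abs
      _ ≤ ∫ z, C * u x z ∂μ := integral_mono hhi.abs (hu.const_mul C) hh
      _ = C := by rw [integral_const_mul, hu1, mul_one]
  have mabs : ∀ F : 𝒵 → ℝ, Measurable F → Measurable (fun z => |F z| ^ p) := fun F hF =>
    ((measurable_norm (α := ℝ)).pow_const p).comp hF
  -- first function
  have f1m : Measurable (fun z => u x z - 1) := hum.sub_const 1
  have f1b : ∀ z, |u x z - 1| ^ p ≤ (1 + u x z) ^ p := fun z =>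
    Real.rpow_le_rpow (abs_nonneg _) (by
      have := hu0 z
      rw [abs_le]; constructor <;> linarith) (by linarith)
  have f1i : Integrable (fun z => |u x z - 1| ^ p) μ := hui.mono' (mabs _ f1m).aestronglyMeasurable
    (Filter.Eventually.of_forall fun z => by
      rw [Real.norm_of_nonneg (by positivity)]; exact f1b z)
  have f1M : ∫ z, |u x z - 1| ^ p ∂μ ≤ M := integral_mono f1i hui f1b
  have f10 : ∫ z, (u x z - 1) ∂μ = 0 := by
    rw [integral_sub hu (integrable_const 1), hu1]; simp
  -- second function
  have f2m : Measurable (fun z => h x z - γ * u x z) := hhm.sub (hum.const_mul γ)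
  have f2b : ∀ z, |h x z - γ * u x z| ^ p ≤ (16 * C ^ 4) * (1 + u x z) ^ p := fun z => by
    have hz := hu0 z
    have e1 : |h x z - γ * u x z| ≤ (2 * C) * (1 + u x z) := by
      have e2 : |γ * u x z| ≤ C * u x z := by
        rw [abs_mul, abs_of_pos hz]; exact mul_le_mul_of_nonneg_right hγC hz.le
      have := abs_sub (h x z) (γ * u x z)
      have := hh z
      nlinarith
    have e3 : (2 * C) ^ p ≤ 16 * C ^ 4 := by
      have := Real.rpow_le_rpow_of_exponent_le (x := 2 * C) (by linarith) hp4
      refine this.trans (le_of_eq ?_)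
      rw [show (4:ℝ) = ((4:ℕ):ℝ) by norm_num, Real.rpow_natCast]; ring
    calc _ ≤ ((2 * C) * (1 + u x z)) ^ p := Real.rpow_le_rpow (abs_nonneg _) e1 (by linarith)
      _ = (2 * C) ^ p * (1 + u x z) ^ p := Real.mul_rpow (by linarith) (by linarith)
      _ ≤ _ := mul_le_mul_of_nonneg_right e3 (Real.rpow_nonneg (by linarith) _)
  have f2i : Integrable (fun z => |h x z - γ * u x z| ^ p) μ :=
    (hui.const_mul _).mono' (mabs _ f2m).aestronglyMeasurable
    (Filter.Eventually.of_forall fun z => by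
      rw [Real.norm_of_nonneg (by positivity)]; exact f2b z)
  have f2M : ∫ z, |h x z - γ * u x z| ^ p ∂μ ≤ 16 * C ^ 4 * M := by
    rw [hMdef, ← integral_const_mul]
    exact integral_mono f2i (hui.const_mul _) f2b
  have f20 : ∫ z, (h x z - γ * u x z) ∂μ = 0 := by
    rw [integral_sub hhi (hu.const_mul γ), integral_const_mul, hu1]; simp [hγ]
  let e1 : Fin n → Fin (2 * n) := fun k => ⟨k.1, by have := k.2; omega⟩
  let e2 : Fin n → Fin (2 * n) := fun k => ⟨n + k.1, by have := k.2; omega⟩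
  have he1 : Function.Injective e1 := fun k l hkl => by
    simp only [e1, Fin.mk.injEq] at hkl; exact Fin.ext hkl
  have he2 : Function.Injective e2 := fun k l hkl => by
    simp only [e2, Fin.mk.injEq] at hkl; exact Fin.ext (by omega)
  have hM0 : 0 < M := by linarith
  have hM2 : 0 < 16 * C ^ 4 * M := by positivity
  obtain ⟨a1, b1⟩ := aux_mean μ p hp hp4 _ f1m f10 f1i M hM0 f1M n (2 * n) hn e1 he1
  obtain ⟨a2, b2⟩ := aux_mean μ p hp hp4 _ f1m f10 f1i M hM0 f1M n (2 * n) hn e2 he2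
  obtain ⟨a3, b3⟩ := aux_mean μ p hp hp4 _ f2m f20 f2i _ hM2 f2M n (2 * n) hn e1 he1
  obtain ⟨a4, b4⟩ := aux_mean μ p hp hp4 _ f2m f20 f2i _ hM2 f2M n (2 * n) hn e2 he2
  refine ⟨_, (((a1.add a2).add a3).add a4).const_mul (16 * C ^ 2), fun zs => ?_, ?_⟩
  · have c1 : ∀ e : Fin n → Fin (2 * n), (n : ℝ)⁻¹ * ∑ k, (u x (zs (e k)) - 1)
        = (n : ℝ)⁻¹ * ∑ k, u x (zs (e k)) - 1 := fun e => by
      rw [Finset.sum_sub_distrib]; simp; field_simp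
    have c2 : ∀ e : Fin n → Fin (2 * n), (n : ℝ)⁻¹ * ∑ k, (h x (zs (e k)) - γ * u x (zs (e k)))
        = (n : ℝ)⁻¹ * ∑ k, h x (zs (e k)) - γ * ((n : ℝ)⁻¹ * ∑ k, u x (zs (e k))) := fun e => by
      rw [Finset.sum_sub_distrib, ← Finset.mul_sum]; ring
    have hne : (Finset.univ : Finset (Fin n)).Nonempty := ⟨⟨0, hn⟩, Finset.mem_univ _⟩
    have pos : ∀ e : Fin n → Fin (2 * n), 0 < ∑ k, u x (zs (e k)) := fun e =>
      Finset.sum_pos (fun k _ => hu0 _) hne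
    have pos' : ∀ e : Fin n → Fin (2 * n), 0 < (n : ℝ)⁻¹ * ∑ k, u x (zs (e k)) := fun e =>
      mul_pos (inv_pos.2 hn0) (pos e)
    have bd : ∀ e : Fin n → Fin (2 * n), |(n : ℝ)⁻¹ * ∑ k, h x (zs (e k))|
        ≤ C * ((n : ℝ)⁻¹ * ∑ k, u x (zs (e k))) := fun e => by
      rw [abs_mul, abs_of_pos (inv_pos.2 hn0)]
      have : |∑ k, h x (zs (e k))| ≤ C * ∑ k, u x (zs (e k)) := by
        rw [Finset.mul_sum]
        exact (Finset.abs_sum_le_sum_abs _ _).trans (Finset.sum_le_sum fun k _ => hh _)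
      calc _ ≤ (n : ℝ)⁻¹ * (C * ∑ k, u x (zs (e k))) := by gcongr
        _ = _ := by ring
    have main := aux_ratio p C _ _ _ _ γ hp hp4 hC (pos' e1) (pos' e2) (bd e1) (bd e2)
    have hgc : gradCorrection u h n x zs =
        (((n : ℝ)⁻¹ * ∑ k, h x (zs (e1 k))) + ((n : ℝ)⁻¹ * ∑ k, h x (zs (e2 k)))) /
        (((n : ℝ)⁻¹ * ∑ k, u x (zs (e1 k))) + ((n : ℝ)⁻¹ * ∑ k, u x (zs (e2 k))))
        - 2⁻¹ * (((n : ℝ)⁻¹ * ∑ k, h x (zs (e1 k))) / ((n : ℝ)⁻¹ * ∑ k, u x (zs (e1 k)))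
          + ((n : ℝ)⁻¹ * ∑ k, h x (zs (e2 k))) / ((n : ℝ)⁻¹ * ∑ k, u x (zs (e2 k)))) := by
      have hni : (n : ℝ)⁻¹ ≠ 0 := (inv_pos.2 hn0).ne'
      rw [← mul_add, ← mul_add, mul_div_mul_left _ _ hni, mul_div_mul_left _ _ hni,
        mul_div_mul_left _ _ hni]
      unfold gradCorrection ratioEstimator
      rw [aux_sum (two_mul n) (fun k => u x (zs k)), aux_sum (two_mul n) (fun k => h x (zs k))]
      simp only [smul_eq_mul, div_eq_inv_mul, e1, e2]
    rw [hgc]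
    simp only [Pi.add_apply, c1, c2]
    exact main
  · rw [integral_const_mul]
    have i2 := integral_add a1 a2
    have i3 := integral_add (a1.add a2) a3
    have i4 := integral_add ((a1.add a2).add a3) a4
    simp only [Pi.add_apply] at i2 i3 i4 ⊢
    rw [i4, i3, i2]
    have : 0 ≤ 16 * C ^ 2 := by positivity
    calc _ ≤ 16 * C ^ 2 * (112 * M * (n:ℝ) ^ (-(p / 2)) + 112 * M * (n:ℝ) ^ (-(p / 2))
          + 112 * (16 * C ^ 4 * M) * (n:ℝ) ^ (-(p / 2))
          + 112 * (16 * C ^ 4 * M) * (n:ℝ) ^ (-(p / 2))) := by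
          apply mul_le_mul_of_nonneg_left _ this
          linarith
      _ = _ := by ring

/-- **Variance decay of the coupled MLMC gradient corrections** (Theorem 3 of the paper).
Let `X ~ ν` and, conditionally on `X`, `Z₁, Z₂, …` i.i.d. `~ q(·; X)`; let `u > 0` be the
normalized importance weight (`∫ u q(dz;x) = 1` a.e.) and `g` the weighted gradient with
`∫ g q(dz;x) = G(x)` a.e.  If `E[u^s] < ∞` for some `s ≥ 2` and
`sup_{x,z} ‖g(x,z)/u(x,z)‖_∞ < ∞`, then the coupled level-`ℓ` gradient correction
`∇Δ_ℓ = Ĝ_{2^ℓ} − ½(Ĝ_{2^{ℓ−1}}⁽ᵃ⁾ + Ĝ_{2^{ℓ−1}}⁽ᵇ⁾)` satisfies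
`E[‖∇Δ_ℓ − E[∇Δ_ℓ]‖₂²] ≤ c·2^{−βℓ}` with `β = min(s/2, 2)`. -/
theorem mlmc_gradient_variance_decay
    {𝒳 𝒵 : Type*} [MeasurableSpace 𝒳] [MeasurableSpace 𝒵] {d : ℕ}
    (ν : Measure 𝒳) [IsProbabilityMeasure ν]
    (q : Kernel 𝒳 𝒵) [IsMarkovKernel q]
    (u : 𝒳 → 𝒵 → ℝ) (hu_meas : Measurable (Function.uncurry u))
    (hu_pos : ∀ x z, 0 < u x z)
    (hu_norm : ∀ᵐ x ∂ν, ∫ z, u x z ∂(q x) = 1)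
    (g : 𝒳 → 𝒵 → EuclideanSpace ℝ (Fin d)) (hg_meas : Measurable (Function.uncurry g))
    (G : 𝒳 → EuclideanSpace ℝ (Fin d))
    (hG : ∀ᵐ x ∂ν, ∫ z, g x z ∂(q x) = G x)
    (s : ℝ) (hs : 2 ≤ s)
    (hus : Integrable (fun p : 𝒳 × 𝒵 => u p.1 p.2 ^ s) (ν ⊗ₘ q))
    (hsup : ∃ Csup : ℝ, ∀ x z i, |g x z i / u x z| ≤ Csup) :
    ∃ c > (0 : ℝ), ∀ ℓ : ℕ, 1 ≤ ℓ →
      jointExp ν q (2 * 2 ^ (ℓ - 1)) (fun x zs =>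
          ‖gradCorrection u g (2 ^ (ℓ - 1)) x zs
              - jointExp ν q (2 * 2 ^ (ℓ - 1)) (gradCorrection u g (2 ^ (ℓ - 1)))‖ ^ 2)
        ≤ c * (2 : ℝ) ^ (-(min (s / 2) 2) * ℓ) := by
  obtain ⟨Cs, hCs⟩ := hsup
  set C : ℝ := max 1 Cs with hCdef
  have hC : 1 ≤ C := le_max_left _ _
  set p : ℝ := min s 4 with hpdef
  have hp : 2 ≤ p := le_min hs (by norm_num)
  have hp4 : p ≤ 4 := min_le_right _ _
  have hps : p ≤ s := min_le_left _ _
  have hgb : ∀ x z i, |g x z i| ≤ C * u x z := fun x z i => by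
    have h1 := (hCs x z i).trans (le_max_right 1 Cs)
    rwa [abs_div, abs_of_pos (hu_pos x z), div_le_iff₀ (hu_pos x z)] at h1
  -- moments
  have hI : Integrable (fun y : 𝒳 × 𝒵 => (1 + u y.1 y.2) ^ p) (ν ⊗ₘ q) := by
    refine Integrable.mono' (((integrable_const (1:ℝ)).add hus).const_mul 32) ?_
      (Filter.Eventually.of_forall fun y => ?_)
    · exact ((measurable_const.add hu_meas).pow_const p).aestronglyMeasurable
    · have hy := hu_pos y.1 y.2
      rw [Real.norm_of_nonneg (Real.rpow_nonneg (by linarith) _)]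
      simp only [Pi.add_apply]
      have h16 : (2:ℝ) ^ p ≤ 16 := by
        have := Real.rpow_le_rpow_of_exponent_le (x := 2) (by norm_num) hp4
        norm_num at this; exact this
      have hus0 := Real.rpow_nonneg hy.le s
      have h3 : (max 1 (u y.1 y.2)) ^ p ≤ 1 + u y.1 y.2 ^ s := by
        rcases max_choice 1 (u y.1 y.2) with h | h <;> rw [h]
        · rw [Real.one_rpow]; linarith
        · exact aux_rpow_le _ _ _ hy.le (by linarith) hps
      calc (1 + u y.1 y.2) ^ p ≤ (2 * max 1 (u y.1 y.2)) ^ p := by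
            apply Real.rpow_le_rpow (by linarith) _ (by linarith)
            have := le_max_left 1 (u y.1 y.2)
            have := le_max_right 1 (u y.1 y.2)
            linarith
        _ = 2 ^ p * (max 1 (u y.1 y.2)) ^ p := Real.mul_rpow (by norm_num) (by positivity)
        _ ≤ 16 * (1 + u y.1 y.2 ^ s) :=
            mul_le_mul h16 h3 (Real.rpow_nonneg (by positivity) _) (by norm_num)
        _ ≤ 32 * (1 + u y.1 y.2 ^ s) := by linarith
  set M : 𝒳 → ℝ := fun x => ∫ z, (1 + u x z) ^ p ∂(q x) with hM
  obtain ⟨hI1, hI2⟩ := (Measure.integrable_compProd_iff hI.1).1 hI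
  have hMi : Integrable M ν := by
    refine hI2.congr (Filter.Eventually.of_forall fun x => ?_)
    simp only [hM]
    congr 1; ext z
    exact Real.norm_of_nonneg (Real.rpow_nonneg (by linarith [hu_pos x z]) _)
  have hM0 : ∀ x, 0 ≤ M x := fun x =>
    integral_nonneg fun z => Real.rpow_nonneg (by linarith [hu_pos x z]) _
  set Mb := ∫ x, M x ∂ν with hMb
  have hMb0 : 0 ≤ Mb := integral_nonneg hM0
  set K : ℝ := d * (16 * C ^ 2 * (224 + 3584 * C ^ 4)) with hK
  have hK0 : 0 ≤ K := by positivity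
  refine ⟨4 * (2 * K * Mb + 2⁻¹ * (1 + K * Mb) ^ 2), by positivity, fun ℓ hℓ => ?_⟩
  set n : ℕ := 2 ^ (ℓ - 1) with hn
  have hn1 : 1 ≤ n := Nat.one_le_two_pow
  set ρ : ℝ := (n : ℝ) ^ (-(p / 2)) with hρ
  have hn0 : (0:ℝ) < n := by exact_mod_cast hn1
  have hρ0 : 0 < ρ := Real.rpow_pos_of_pos hn0 _
  have key : ∀ᵐ x ∂ν, ∃ D : (Fin (2 * n) → 𝒵) → ℝ, Integrable D (Measure.pi fun _ => q x) ∧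
      (∀ zs, ‖gradCorrection u g n x zs‖ ^ 2 ≤ D zs) ∧
      ∫ zs, D zs ∂(Measure.pi fun _ => q x) ≤ K * M x * ρ := by
    filter_upwards [hu_norm, hI1] with x hx1 hx2
    have hum : Measurable (u x) := hu_meas.comp measurable_prodMk_left
    have hgm : Measurable (g x) := hg_meas.comp measurable_prodMk_left
    have hc := fun i : Fin d => aux_scalar (q x) p hp hp4 u x hum (hu_pos x) hx1 hx2
      (fun x z => g x z i) (by fun_prop) C hC (fun z => hgb x z i) n hn1
    choose D h1 h2 h3 using hc
    refine ⟨fun zs => ∑ i, D i zs, integrable_finsetSum _ fun i _ => h1 i, fun zs => ?_, ?_⟩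
    · rw [EuclideanSpace.norm_sq_eq]
      refine Finset.sum_le_sum fun i _ => ?_
      refine le_trans (le_of_eq ?_) (h2 i zs)
      rw [Real.norm_eq_abs, sq_abs]
      congr 1
      simp [gradCorrection, ratioEstimator]
      ring
    · rw [integral_finsetSum _ fun i _ => h1 i]
      calc _ ≤ ∑ i : Fin d, (16 * C ^ 2 * (224 + 3584 * C ^ 4)) * M x * ρ :=
            Finset.sum_le_sum fun i _ => h3 i
        _ = _ := by simp [hK]; ring
  set m := jointExp ν q (2 * n) (gradCorrection u g n) with hm
  set ε : ℝ := √ρ with hε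
  have hε0 : 0 < ε := Real.sqrt_pos.2 hρ0
  have hε2 : ε ^ 2 = ρ := Real.sq_sqrt hρ0.le
  have hmb : ‖m‖ ≤ ε / 2 * (1 + K * Mb) := by
    calc ‖m‖ ≤ ∫ x, ‖∫ zs, gradCorrection u g n x zs ∂(Measure.pi fun _ => q x)‖ ∂ν :=
          norm_integral_le_integral_norm _
      _ ≤ ∫ x, ε / 2 * (1 + K * M x) ∂ν := by
          refine integral_mono_of_nonneg (Filter.Eventually.of_forall fun x => norm_nonneg _)
            (((integrable_const 1).add (hMi.const_mul K)).const_mul _) ?_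
          filter_upwards [key] with x hx
          obtain ⟨D, h1, h2, h3⟩ := hx
          calc _ ≤ ∫ zs, ‖gradCorrection u g n x zs‖ ∂(Measure.pi fun _ => q x) :=
                norm_integral_le_integral_norm _
            _ ≤ ∫ zs, (ε / 2 + (2 * ε)⁻¹ * D zs) ∂(Measure.pi fun _ => q x) := by
                refine integral_mono_of_nonneg
                  (Filter.Eventually.of_forall fun x => norm_nonneg _)
                  ((integrable_const _).add (h1.const_mul _))
                  (Filter.Eventually.of_forall fun zs => ?_)
                have hz := h2 zs
                set y := ‖gradCorrection u g n x zs‖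
                have : y ≤ ε / 2 + (2 * ε)⁻¹ * y ^ 2 := by
                  have e : ε / 2 + (2 * ε)⁻¹ * y ^ 2 - y = (2 * ε)⁻¹ * (ε - y) ^ 2 := by
                    field_simp; ring
                  have : 0 ≤ (2 * ε)⁻¹ * (ε - y) ^ 2 := by positivity
                  linarith
                exact this.trans (add_le_add le_rfl
                  (mul_le_mul_of_nonneg_left hz (by positivity)))
            _ = ε / 2 + (2 * ε)⁻¹ * ∫ zs, D zs ∂(Measure.pi fun _ => q x) := by
                rw [integral_add (integrable_const _) (h1.const_mul _), integral_const_mul]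
                simp
            _ ≤ ε / 2 + (2 * ε)⁻¹ * (K * M x * ρ) := by gcongr
            _ = ε / 2 * (1 + K * M x) := by rw [← hε2]; field_simp
      _ = _ := by
          rw [integral_const_mul, integral_add (integrable_const 1) (hMi.const_mul K),
            integral_const_mul]
          simp [hMb]
  have hmb2 : ‖m‖ ^ 2 ≤ ρ / 4 * (1 + K * Mb) ^ 2 := by
    calc ‖m‖ ^ 2 ≤ (ε / 2 * (1 + K * Mb)) ^ 2 := pow_le_pow_left₀ (norm_nonneg _) hmb 2
      _ = _ := by rw [← hε2]; ring
  have hfin : jointExp ν q (2 * n) (fun x zs => ‖gradCorrection u g n x zs - m‖ ^ 2)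
      ≤ (2 * K * Mb + 2⁻¹ * (1 + K * Mb) ^ 2) * ρ := by
    calc _ ≤ ∫ x, (2 * (K * M x * ρ) + 2 * ‖m‖ ^ 2) ∂ν := by
          unfold jointExp
          refine integral_mono_of_nonneg
            (Filter.Eventually.of_forall fun x => integral_nonneg fun zs => by positivity)
            ((((hMi.const_mul K).mul_const ρ).const_mul 2).add (integrable_const _)) ?_
          filter_upwards [key] with x hx
          obtain ⟨D, h1, h2, h3⟩ := hx
          calc _ ≤ ∫ zs, (2 * D zs + 2 * ‖m‖ ^ 2) ∂(Measure.pi fun _ => q x) := by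
                refine integral_mono_of_nonneg
                  (Filter.Eventually.of_forall fun x => by positivity)
                  ((h1.const_mul _).add (integrable_const _))
                  (Filter.Eventually.of_forall fun zs => ?_)
                have hz := h2 zs
                have ht := norm_sub_le (gradCorrection u g n x zs) m
                have ht2 := pow_le_pow_left₀ (norm_nonneg _) ht 2
                simp only
                nlinarith [sq_nonneg (‖gradCorrection u g n x zs‖ - ‖m‖)]
            _ = 2 * ∫ zs, D zs ∂(Measure.pi fun _ => q x) + 2 * ‖m‖ ^ 2 := by
                rw [integral_add (h1.const_mul _) (integrable_const _), integral_const_mul]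
                simp
            _ ≤ _ := by linarith
      _ = 2 * (K * Mb * ρ) + 2 * ‖m‖ ^ 2 := by
          rw [integral_add (((hMi.const_mul K).mul_const ρ).const_mul 2) (integrable_const _),
            integral_const_mul, integral_mul_const, integral_const_mul]
          simp [hMb]
      _ ≤ _ := by linarith
  refine hfin.trans ?_
  have hβ : min (s / 2) 2 = p / 2 := by
    rw [hpdef, ← min_div_div_right (by norm_num : (0:ℝ) ≤ 2)]; norm_num
  have hρ4 : ρ ≤ 4 * (2:ℝ) ^ (-(min (s / 2) 2) * ℓ) := by
    have e1 : (n : ℝ) = (2:ℝ) ^ ((ℓ:ℝ) - 1) := by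
      rw [hn]; push_cast
      rw [← Real.rpow_natCast]; congr 1
      push_cast [Nat.cast_sub hℓ]; ring
    rw [hβ, hρ, e1, ← Real.rpow_mul (by norm_num)]
    have e2 : ((ℓ:ℝ) - 1) * -(p / 2) = p / 2 + -(p / 2) * ℓ := by ring
    rw [e2, Real.rpow_add (by norm_num)]
    gcongr
    have := Real.rpow_le_rpow_of_exponent_le (x := 2) (by norm_num) (by linarith : p / 2 ≤ 2)
    norm_num at this; exact this
  calc _ ≤ (2 * K * Mb + 2⁻¹ * (1 + K * Mb) ^ 2) * (4 * (2:ℝ) ^ (-(min (s / 2) 2) * ℓ)) := by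
        gcongr
    _ = _ := by ring
end
end

section
/- Suppose there exists s ≥ 2 such that E[u(X, Z_1)^s] < ∞ and sup_{x,z} ‖g(x, z)/u(x, z)‖_∞ < ∞. Then there exists a constant c > 0 such that for every ℓ ≥ 0 the bias of the level-2^ℓ gradient estimator satisfies ‖E[Ĝ_{2^ℓ}] − E[G(X)]‖_2 ≤ c·2^{−αℓ}, where α = min(s/2, 1). -/
open MeasureTheory ProbabilityTheory Finset
open scoped ENNReal

noncomputable section

theorem aux_sq {𝒵 : Type*} [MeasurableSpace 𝒵] (P : Measure 𝒵) [IsProbabilityMeasure P]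
    (n : ℕ) (w : 𝒵 → ℝ) (hw : MemLp w 2 P) (h0 : ∫ z, w z ∂P = 0) :
    MemLp (fun zs : Fin n → 𝒵 => ∑ k, w (zs k)) 2 (Measure.pi fun _ : Fin n => P) ∧
    ∫ zs, (∑ k, w (zs k)) ∂(Measure.pi fun _ : Fin n => P) = 0 ∧
    ∫ zs, (∑ k, w (zs k)) ^ 2 ∂(Measure.pi fun _ : Fin n => P) = n * ∫ z, w z ^ 2 ∂P := by
  have hk : ∀ k : Fin n, MemLp (fun zs : Fin n → 𝒵 => w (zs k)) 2
      (Measure.pi fun _ : Fin n => P) := fun k =>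
    hw.comp_measurePreserving (measurePreserving_eval (fun _ : Fin n => P) k)
  have hm : MemLp (fun zs : Fin n → 𝒵 => ∑ k, w (zs k)) 2 (Measure.pi fun _ : Fin n => P) :=
    memLp_finsetSum _ fun k _ => hk k
  have hi : ∫ zs, (∑ k, w (zs k)) ∂(Measure.pi fun _ : Fin n => P) = 0 := by
    rw [integral_finsetSum _ fun k _ => (hk k).integrable (by norm_num)]
    refine Finset.sum_eq_zero fun k _ => ?_
    rw [← h0]
    exact integral_comp_eval (μ := fun _ : Fin n => P) hw.1
  refine ⟨hm, hi, ?_⟩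
  have hv := variance_sum_pi (μ := fun _ : Fin n => P) (X := fun _ => w) (fun _ => hw)
  have e : (∑ i : Fin n, fun ω : Fin n → 𝒵 => w (ω i)) = fun zs => ∑ k, w (zs k) := by
    ext zs; simp
  rw [e, variance_of_integral_eq_zero hm.1.aemeasurable hi,
    variance_of_integral_eq_zero hw.1.aemeasurable h0] at hv
  simpa using hv

theorem aux_ratio_le {𝒵 : Type*} (n : ℕ) (u h : 𝒵 → ℝ) (hup : ∀ z, 0 < u z) (C : ℝ) (hC : 0 ≤ C)
    (hh : ∀ z, |h z| ≤ C * u z) (zs : Fin n → 𝒵) :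
    |(∑ k, u (zs k))⁻¹ * ∑ k, h (zs k)| ≤ C := by
  have hS : 0 ≤ ∑ k, u (zs k) := Finset.sum_nonneg fun k _ => (hup _).le
  have hT : |∑ k, h (zs k)| ≤ C * ∑ k, u (zs k) := by
    rw [Finset.mul_sum]
    exact (Finset.abs_sum_le_sum_abs _ _).trans (Finset.sum_le_sum fun k _ => hh _)
  rw [abs_mul, abs_inv, abs_of_nonneg hS]
  rcases hS.eq_or_lt with h | h
  · rw [← h]; simpa using hC
  · rw [inv_mul_le_iff₀ h]; linarith

theorem aux_bias {𝒵 : Type*} [MeasurableSpace 𝒵] (P : Measure 𝒵) [IsProbabilityMeasure P]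
    (n : ℕ) (hn : 0 < n) (u h : 𝒵 → ℝ) (hu : Measurable u) (hh : Measurable h)
    (hup : ∀ z, 0 < u z) (h1 : ∫ z, u z ∂P = 1) (C : ℝ) (hC : 0 ≤ C)
    (hhu : ∀ z, |h z| ≤ C * u z) (h2 : Integrable (fun z => u z ^ 2) P) :
    |∫ zs, (∑ k, u (zs k))⁻¹ * ∑ k, h (zs k) ∂(Measure.pi fun _ : Fin n => P) - ∫ z, h z ∂P|
      ≤ (2 * C + 2 * C ^ 2 + 1) * (∫ z, u z ^ 2 ∂P) / n := by
  set m := ∫ z, h z ∂P with hm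
  set M := ∫ z, u z ^ 2 ∂P with hM
  set Q := Measure.pi fun _ : Fin n => P with hQ
  have hu2 : MemLp u 2 P := (memLp_two_iff_integrable_sq hu.aestronglyMeasurable).2 h2
  have hui : Integrable u P := hu2.integrable (by norm_num)
  have hh2 : MemLp h 2 P := by
    refine (hu2.const_mul C).mono hh.aestronglyMeasurable (Filter.Eventually.of_forall fun z => ?_)
    rw [Real.norm_eq_abs, Real.norm_eq_abs]
    exact (hhu z).trans (le_abs_self _)
  have hhi : Integrable h P := hh2.integrable (by norm_num)
  have hmC : |m| ≤ C := by
    calc |m| ≤ ∫ z, C * u z ∂P := by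
          have := norm_integral_le_of_norm_le (f := h) (hui.const_mul C)
            (Filter.Eventually.of_forall hhu)
          simpa using this
      _ = C := by rw [integral_const_mul, h1, mul_one]
  have hM0 : 0 ≤ M := integral_nonneg fun z => sq_nonneg _
  have hd2 : MemLp (fun z => 1 - u z) 2 P := (memLp_const 1).sub hu2
  have hw2 : MemLp (fun z => h z - m * u z) 2 P := hh2.sub (hu2.const_mul m)
  have hd0 : ∫ z, (1 - u z) ∂P = 0 := by
    rw [integral_sub (integrable_const _) hui, h1]; simp
  have hw0 : ∫ z, (h z - m * u z) ∂P = 0 := by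
    rw [integral_sub hhi (hui.const_mul m), integral_const_mul, h1, ← hm]; ring
  obtain ⟨D2, -, DV⟩ := aux_sq P n _ hd2 hd0
  obtain ⟨A2, A0, AV⟩ := aux_sq P n _ hw2 hw0
  rw [← hQ] at D2 DV A2 A0 AV
  have hdM : ∫ z, (1 - u z) ^ 2 ∂P ≤ M := by
    have : ∫ z, (1 - u z) ^ 2 ∂P = M - 1 := by
      have e : (fun z => (1 - u z) ^ 2) = fun z => (u z ^ 2 - 2 * u z) + 1 := by
        ext z; ring
      have hi : Integrable (fun z => u z ^ 2 - 2 * u z) P := h2.sub (hui.const_mul 2)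
      rw [e, integral_add hi (integrable_const _),
        integral_sub h2 (hui.const_mul 2), integral_const_mul, h1]
      simp; ring
    linarith
  have hwM : ∫ z, (h z - m * u z) ^ 2 ∂P ≤ 4 * C ^ 2 * M := by
    rw [hM, ← integral_const_mul]
    refine integral_mono hw2.integrable_sq (h2.const_mul _) fun z => ?_
    have hz := hup z
    have b : |h z - m * u z| ≤ 2 * C * u z := by
      calc |h z - m * u z| ≤ |h z| + |m * u z| := abs_sub _ _
        _ = |h z| + |m| * u z := by rw [abs_mul, abs_of_pos hz]
        _ ≤ C * u z + C * u z := by gcongr; exact hhu z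
        _ = _ := by ring
    calc (h z - m * u z) ^ 2 = |h z - m * u z| ^ 2 := (sq_abs _).symm
      _ ≤ (2 * C * u z) ^ 2 := by gcongr
      _ = _ := by ring
  set D : (Fin n → 𝒵) → ℝ := fun zs => ∑ k, (1 - u (zs k)) with hD
  set A : (Fin n → 𝒵) → ℝ := fun zs => ∑ k, (h (zs k) - m * u (zs k)) with hA
  set R : (Fin n → 𝒵) → ℝ := fun zs => (∑ k, u (zs k))⁻¹ * ∑ k, h (zs k) with hR
  have hRm : Measurable R := by rw [hR]; fun_prop
  have hRC : ∀ zs, |R zs| ≤ C := fun zs => aux_ratio_le n u h hup C hC hhu zs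
  have hRi : Integrable R Q := Integrable.of_bound hRm.aestronglyMeasurable C
    (Filter.Eventually.of_forall hRC)
  have hn' : (0 : ℝ) < n := by exact_mod_cast hn
  have key : ∀ zs, (n : ℝ) ^ 2 * (R zs - m) = (R zs - m) * D zs ^ 2 + A zs * D zs + n * A zs := by
    intro zs
    have hS : 0 < ∑ k, u (zs k) := by
      have : Nonempty (Fin n) := ⟨⟨0, hn⟩⟩
      exact Finset.sum_pos (fun k _ => hup _) Finset.univ_nonempty
    have eD : D zs = n - ∑ k, u (zs k) := by simp [hD]
    have eA : A zs = ∑ k, h (zs k) - m * ∑ k, u (zs k) := by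
      simp [hA, Finset.mul_sum]
    rw [eD, eA]
    simp only [hR]
    field_simp
    ring
  have hDsq : Integrable (fun zs => D zs ^ 2) Q := D2.integrable_sq
  have hAsq : Integrable (fun zs => A zs ^ 2) Q := A2.integrable_sq
  have hAi : Integrable A Q := A2.integrable (by norm_num)
  have hrhs : ∀ zs, |(n : ℝ) ^ 2 * (R zs - m) - n * A zs| ≤
      (2 * C + 1 / 2) * D zs ^ 2 + 1 / 2 * A zs ^ 2 := by
    intro zs
    rw [key zs, add_sub_cancel_right]
    have b : |R zs - m| ≤ 2 * C := by
      have := abs_sub (R zs) m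
      linarith [hRC zs]
    calc _ ≤ |(R zs - m) * D zs ^ 2| + |A zs * D zs| := abs_add_le _ _
      _ = |R zs - m| * D zs ^ 2 + |A zs| * |D zs| := by
        rw [abs_mul, abs_mul, abs_of_nonneg (sq_nonneg (D zs))]
      _ ≤ 2 * C * D zs ^ 2 + |A zs| * |D zs| := by gcongr
      _ ≤ _ := by nlinarith [sq_nonneg (|A zs| - |D zs|), sq_abs (A zs), sq_abs (D zs)]
  have hfin := norm_integral_le_of_norm_le (μ := Q)
    (f := fun zs => (n : ℝ) ^ 2 * (R zs - m) - n * A zs)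
    ((hDsq.const_mul (2 * C + 1 / 2)).add (hAsq.const_mul (1 / 2)))
    (Filter.Eventually.of_forall hrhs)
  have e1 : ∫ zs, ((n : ℝ) ^ 2 * (R zs - m) - n * A zs) ∂Q = n ^ 2 * (∫ zs, R zs ∂Q - m) := by
    have hi : Integrable (fun zs => R zs - m) Q := hRi.sub (integrable_const m)
    rw [integral_sub (hi.const_mul _) (hAi.const_mul _),
      integral_const_mul, integral_const_mul, A0,
      integral_sub hRi (integrable_const m)]
    simp
  have e2 : ∫ zs, ((fun zs => (2 * C + 1 / 2) * D zs ^ 2 : (Fin n → 𝒵) → ℝ) +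
      (fun zs => 1 / 2 * A zs ^ 2 : (Fin n → 𝒵) → ℝ)) zs ∂Q
      = (2 * C + 1 / 2) * ∫ zs, D zs ^ 2 ∂Q + 1 / 2 * ∫ zs, A zs ^ 2 ∂Q := by
    rw [integral_add' (hDsq.const_mul _) (hAsq.const_mul _), integral_const_mul,
      integral_const_mul]
  rw [e1, e2, DV, AV, Real.norm_eq_abs, abs_mul, abs_of_pos (by positivity : (0 : ℝ) < n ^ 2)] at hfin
  rw [le_div_iff₀ hn']
  have hle : (2 * C + 1 / 2) * (n * ∫ z, (1 - u z) ^ 2 ∂P)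
      + 1 / 2 * (n * ∫ z, (h z - m * u z) ^ 2 ∂P)
      ≤ (2 * C + 1 / 2) * (n * M) + 1 / 2 * (n * (4 * C ^ 2 * M)) := by gcongr
  have h3 := hfin.trans hle
  have h4 : (n : ℝ) * (|∫ zs, R zs ∂Q - m| * n) ≤ n * ((2 * C + 2 * C ^ 2 + 1) * M) := by
    nlinarith [mul_nonneg hn'.le hM0]
  exact le_of_mul_le_mul_left h4 hn'

theorem aux_norm_le {d : ℕ} (v : EuclideanSpace ℝ (Fin d)) (B : ℝ) (h : ∀ i, |v i| ≤ B) :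
    ‖v‖ ≤ d * B := by
  have h1 : ‖v‖ ≤ ∑ i, |v i| := by
    rw [EuclideanSpace.norm_eq]
    refine Real.sqrt_le_iff.2 ⟨Finset.sum_nonneg fun i _ => abs_nonneg _, ?_⟩
    exact Finset.sum_sq_le_sq_sum_of_nonneg fun i _ => abs_nonneg _
  refine h1.trans ((Finset.sum_le_sum fun i _ => h i).trans ?_)
  simp

theorem aux_pi_meas {𝒳 𝒵 : Type*} [MeasurableSpace 𝒳] [MeasurableSpace 𝒵]
    (q : Kernel 𝒳 𝒵) [IsMarkovKernel q] (n : ℕ) :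
    Measurable fun x => (Measure.pi fun _ : Fin n => q x) := by
  refine Measurable.measure_of_isPiSystem_of_isProbabilityMeasure
    (generateFrom_pi (α := fun _ : Fin n => 𝒵)).symm isPiSystem_pi ?_
  rintro _ ⟨t, ht, rfl⟩
  simp only [Measure.pi_pi]
  refine Finset.measurable_prod _ fun i _ => ?_
  exact q.measurable_coe (ht i (Set.mem_univ i))

/-- **Bias decay of the self-normalized gradient estimator** (Theorem 3 of the paper).
Let `X ~ ν` and, conditionally on `X`, `Z₁, Z₂, …` i.i.d. `~ q(·; X)`; let `u > 0` be the
normalized importance weight (`∫ u q(dz;x) = 1` a.e.) and `g` the weighted gradient with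
`∫ g q(dz;x) = G(x)` a.e.  If `E[u^s] < ∞` for some `s ≥ 2` and
`sup_{x,z} ‖g(x,z)/u(x,z)‖_∞ < ∞`, then the level-`2^ℓ` ratio estimator
`Ĝ_{2^ℓ} = (∑ₖ g(X,Zₖ))/(∑ₖ u(X,Zₖ))` satisfies
`‖E[Ĝ_{2^ℓ}] − E[G(X)]‖₂ ≤ c·2^{−αℓ}` with `α = min(s/2, 1)`. -/
theorem gradient_bias_decay
    {𝒳 𝒵 : Type*} [MeasurableSpace 𝒳] [MeasurableSpace 𝒵] {d : ℕ}
    (ν : Measure 𝒳) [IsProbabilityMeasure ν]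
    (q : Kernel 𝒳 𝒵) [IsMarkovKernel q]
    (u : 𝒳 → 𝒵 → ℝ) (hu_meas : Measurable (Function.uncurry u))
    (hu_pos : ∀ x z, 0 < u x z)
    (hu_norm : ∀ᵐ x ∂ν, ∫ z, u x z ∂(q x) = 1)
    (g : 𝒳 → 𝒵 → EuclideanSpace ℝ (Fin d)) (hg_meas : Measurable (Function.uncurry g))
    (G : 𝒳 → EuclideanSpace ℝ (Fin d))
    (hG : ∀ᵐ x ∂ν, ∫ z, g x z ∂(q x) = G x)
    (s : ℝ) (hs : 2 ≤ s)
    (hus : Integrable (fun p : 𝒳 × 𝒵 => u p.1 p.2 ^ s) (ν ⊗ₘ q))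
    (hsup : ∃ Csup : ℝ, ∀ x z i, |g x z i / u x z| ≤ Csup) :
    ∃ c > (0 : ℝ), ∀ ℓ : ℕ,
      ‖jointExp ν q (2 ^ ℓ) (fun x zs => ratioEstimator u g x zs) - ∫ x, G x ∂ν‖
        ≤ c * (2 : ℝ) ^ (-(min (s / 2) 1) * ℓ) := by
  obtain ⟨C₀, hC₀⟩ := hsup
  set C := |C₀| with hCdef
  have hC : 0 ≤ C := abs_nonneg _
  have hgu : ∀ x i z, |g x z i| ≤ C * u x z := by
    intro x i z
    have h := (hC₀ x z i).trans (le_abs_self _)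
    rwa [abs_div, abs_of_pos (hu_pos x z), div_le_iff₀ (hu_pos x z)] at h
  have hu2 : Integrable (fun p : 𝒳 × 𝒵 => u p.1 p.2 ^ 2) (ν ⊗ₘ q) := by
    refine ((integrable_const (1 : ℝ)).add hus).mono'
      (hu_meas.pow_const 2).aestronglyMeasurable (Filter.Eventually.of_forall fun p => ?_)
    have hp := hu_pos p.1 p.2
    rw [Real.norm_of_nonneg (by positivity)]
    simp only [Pi.add_apply]
    rcases le_total (u p.1 p.2) 1 with h | h
    · have := pow_le_one₀ (n := 2) hp.le h
      have := Real.rpow_nonneg hp.le s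
      linarith
    · have := Real.rpow_le_rpow_of_exponent_le h hs
      rw [Real.rpow_two] at this
      linarith
  have hu2' := (Measure.integrable_compProd_iff hu2.1).1 hu2
  obtain ⟨hu2x, hMi⟩ := hu2'
  have hMi : Integrable (fun x => ∫ z, u x z ^ 2 ∂(q x)) ν := by
    refine hMi.congr (Filter.Eventually.of_forall fun x => ?_)
    simp
  set M : 𝒳 → ℝ := fun x => ∫ z, u x z ^ 2 ∂(q x) with hM
  have hM0 : ∀ x, 0 ≤ M x := fun x => integral_nonneg fun z => sq_nonneg _
  set L := 2 * C + 2 * C ^ 2 + 1 with hL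
  have hL0 : 0 < L := by positivity
  have hux : ∀ x, Measurable (u x) := fun x => hu_meas.comp measurable_prodMk_left
  have hgx : ∀ x, Measurable (g x) := fun x => hg_meas.comp measurable_prodMk_left
  have hgxi : ∀ x i, Measurable (fun z => g x z i) := fun x i => by
    have := hgx x
    fun_prop
  have hGi : Integrable (fun x => ∫ z, g x z ∂(q x)) ν := by
    refine Integrable.of_bound
      (hg_meas.stronglyMeasurable.integral_kernel_prod_right' (κ := q)).aestronglyMeasurable
      (d * C) ?_
    filter_upwards [hu_norm] with x hx
    have hui : Integrable (u x) (q x) := by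
      by_contra h
      rw [integral_undef h] at hx
      exact zero_ne_one hx
    have := norm_integral_le_of_norm_le (μ := q x) (f := g x) (hui.const_mul (d * C))
      (Filter.Eventually.of_forall fun z => (aux_norm_le _ _ fun i => hgu x i z).trans_eq (by ring))
    rwa [integral_const_mul, hx, mul_one] at this
  refine ⟨d * (L * ∫ x, M x ∂ν) + 1, ?_, fun ℓ => ?_⟩
  · have : 0 ≤ ∫ x, M x ∂ν := integral_nonneg fun x => hM0 x
    positivity
  have hn : 0 < 2 ^ ℓ := by positivity
  have hcast : (2 : ℝ) ^ (-(min (s / 2) 1) * ℓ) = (((2 ^ ℓ : ℕ) : ℝ))⁻¹ := by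
    rw [min_eq_right (by linarith), neg_one_mul, Real.rpow_neg (by norm_num), Real.rpow_natCast]
    push_cast; rfl
  rw [hcast]
  generalize 2 ^ ℓ = n at hn
  have hn' : (0 : ℝ) < n := by exact_mod_cast hn
  have hcomp : ∀ x (zs : Fin n → 𝒵) i, ratioEstimator u g x zs i
      = (∑ k, u x (zs k))⁻¹ * ∑ k, g x (zs k) i := by
    intro x zs i
    simp [ratioEstimator]
  have hRb : ∀ x (zs : Fin n → 𝒵), ‖ratioEstimator u g x zs‖ ≤ d * C := by
    intro x zs
    refine aux_norm_le _ _ fun i => ?_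
    rw [hcomp]
    exact aux_ratio_le n (u x) (fun z => g x z i) (hu_pos x) C hC (hgu x i) zs
  have hRm : Measurable fun p : 𝒳 × (Fin n → 𝒵) => ratioEstimator u g p.1 p.2 := by
    unfold ratioEstimator
    refine Measurable.fun_smul (Measurable.fun_inv (Finset.measurable_fun_sum _ fun k _ => ?_))
      (Finset.measurable_fun_sum _ fun k _ => ?_)
    · exact hu_meas.comp (f := fun p : 𝒳 × (Fin n → 𝒵) => (p.1, p.2 k)) (by fun_prop)
    · exact hg_meas.comp (f := fun p : 𝒳 × (Fin n → 𝒵) => (p.1, p.2 k)) (by fun_prop)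
  let Q : Kernel 𝒳 (Fin n → 𝒵) := ⟨fun x => Measure.pi fun _ => q x, aux_pi_meas q n⟩
  have hQ : ∀ x, Q x = Measure.pi fun _ => q x := fun x => rfl
  have : IsMarkovKernel Q := ⟨fun x => by rw [hQ]; infer_instance⟩
  have hRi : ∀ x, Integrable (fun zs => ratioEstimator u g x zs)
      (Measure.pi fun _ : Fin n => q x) := fun x =>
    Integrable.of_bound (hRm.comp measurable_prodMk_left).aestronglyMeasurable (d * C)
      (Filter.Eventually.of_forall (hRb x))
  have hFi : Integrable (fun x => ∫ zs, ratioEstimator u g x zs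
      ∂(Measure.pi fun _ : Fin n => q x)) ν := by
    refine Integrable.of_bound
      (hRm.stronglyMeasurable.integral_kernel_prod_right' (κ := Q)).aestronglyMeasurable
      (d * C) (Filter.Eventually.of_forall fun x => ?_)
    refine (norm_integral_le_of_norm_le_const (C := d * C)
      (Filter.Eventually.of_forall (hRb x))).trans_eq ?_
    simp
  rw [← integral_congr_ae hG, jointExp, ← integral_sub hFi hGi]
  have hbound : ∀ᵐ x ∂ν, ‖∫ zs, ratioEstimator u g x zs ∂(Measure.pi fun _ : Fin n => q x)
      - ∫ z, g x z ∂(q x)‖ ≤ d * (L * M x / n) := by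
    filter_upwards [hu_norm, hu2x] with x hx hx2
    refine aux_norm_le _ _ fun i => ?_
    have hui : Integrable (u x) (q x) := by
      by_contra h
      rw [integral_undef h] at hx
      exact zero_ne_one hx
    have hgi : Integrable (g x) (q x) := 
      (hui.const_mul (d * C)).mono' (hgx x).aestronglyMeasurable
      (Filter.Eventually.of_forall fun z => (aux_norm_le _ _ fun i => hgu x i z).trans_eq (by ring))
    have e1 := (EuclideanSpace.proj  i : EuclideanSpace ℝ (Fin d) →L[ℝ] ℝ).integral_comp_comm (hRi x)
    have e2 := (EuclideanSpace.proj  i : EuclideanSpace ℝ (Fin d) →L[ℝ] ℝ).integral_comp_comm hgi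
    simp only [EuclideanSpace.coe_proj] at e1 e2
    rw [PiLp.sub_apply, ← e1, ← e2]
    simp only [hcomp]
    exact aux_bias (q x) n hn (u x) (fun z => g x z i) (hux x) (hgxi x i) (hu_pos x) hx C hC
      (hgu x i) hx2
  refine (norm_integral_le_of_norm_le (((hMi.const_mul L).div_const n).const_mul d) hbound).trans ?_
  rw [integral_const_mul, integral_div, integral_const_mul]
  have : 0 < (n : ℝ)⁻¹ := by positivity
  rw [add_mul, div_eq_mul_inv]
  linarith
end
end

section
/- Suppose there exists s ≥ 2 such that E[u(Θ, X, Z_1)^s] < ∞ and sup_{θ,x,z} ‖g(θ, x, z)/u(θ, x, z)‖_∞ < ∞. Then there exists a constant c > 0 such that for every ℓ ≥ 1 the coupled level-ℓ gradient correction satisfies E[‖∇Δ_ℓ − E[∇Δ_ℓ]‖_2²] ≤ c·2^{−βℓ} with β = min(s/2, 2), and for every ℓ ≥ 0 the bias satisfies ‖E[Ĝ_{2^ℓ}] − E[G(Θ, X)]‖_2 ≤ c·2^{−αℓ} with α = min(s/2, 1). -/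
open MeasureTheory ProbabilityTheory Finset
open scoped ENNReal

noncomputable section

/-- Vector-valued expectation of a functional `f` of a global parameter `θ ~ r`, a data
point `x ~ ν` (independent of `θ`), and `n` samples drawn i.i.d. (conditionally on `x`)
from the proposal kernel `q`. -/
def jointExp3 {Θ 𝒳 𝒵 : Type*} [MeasurableSpace Θ] [MeasurableSpace 𝒳] [MeasurableSpace 𝒵]
    {E : Type*} [NormedAddCommGroup E] [NormedSpace ℝ E]
    (r : Measure Θ) (ν : Measure 𝒳) (q : Kernel 𝒳 𝒵) (n : ℕ)
    (f : Θ → 𝒳 → (Fin n → 𝒵) → E) : E :=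
  ∫ θ, ∫ x, ∫ zs, f θ x zs ∂(Measure.pi fun _ : Fin n => q x) ∂ν ∂r

/-- The self-normalized (ratio) gradient estimator
`Ĝ = (∑ₖ g(θ, x, zₖ)) / (∑ₖ u(θ, x, zₖ))`. -/
def ratioEstimator3 {Θ 𝒳 𝒵 E : Type*} [AddCommGroup E] [Module ℝ E]
    (u : Θ → 𝒳 → 𝒵 → ℝ) (g : Θ → 𝒳 → 𝒵 → E) {n : ℕ} (θ : Θ) (x : 𝒳)
    (zs : Fin n → 𝒵) : E :=
  (∑ k, u θ x (zs k))⁻¹ • ∑ k, g θ x (zs k)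

/-- The coupled level gradient correction `∇Δ = Ĝ_{2n} − ½(Ĝₙ⁽ᵃ⁾ + Ĝₙ⁽ᵇ⁾)` formed from all
`2n` samples, the first `n` samples and the last `n` samples respectively. -/
def gradCorrection3 {Θ 𝒳 𝒵 E : Type*} [AddCommGroup E] [Module ℝ E]
    (u : Θ → 𝒳 → 𝒵 → ℝ) (g : Θ → 𝒳 → 𝒵 → E) (n : ℕ) (θ : Θ) (x : 𝒳)
    (zs : Fin (2 * n) → 𝒵) : E :=
  ratioEstimator3 u g θ x zs
    - (2 : ℝ)⁻¹ • (ratioEstimator3 u g θ x (fun k : Fin n => zs ⟨k.1, by have := k.2; omega⟩)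
        + ratioEstimator3 u g θ x (fun k : Fin n => zs ⟨n + k.1, by have := k.2; omega⟩))


lemma aux_xy {x y K p : ℝ} (hx : 0 ≤ x) (hy : 0 ≤ y) (hK : 1 ≤ K) (hp : 2 ≤ p) :
    x ^ (p - 2) * y ^ 2 ≤ x ^ p / K + K ^ (p / 2 - 1) * y ^ p := by
  have hK0 : 0 < K := by linarith
  have hsplit : ∀ w : ℝ, 0 ≤ w → w ^ p = w ^ (p - 2) * w ^ 2 := by
    intro w hw
    rw [← Real.rpow_natCast w 2, ← Real.rpow_add_of_nonneg hw (by linarith) (by norm_num)]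
    congr 1; push_cast; ring
  have h1 : 0 ≤ x ^ p / K := by positivity
  have h2 : 0 ≤ K ^ (p / 2 - 1) * y ^ p := by positivity
  by_cases h : K * y ^ 2 ≤ x ^ 2
  · have : x ^ (p - 2) * y ^ 2 ≤ x ^ p / K := by
      rw [hsplit x hx, le_div_iff₀ hK0]
      have := mul_le_mul_of_nonneg_left h (Real.rpow_nonneg hx (p - 2))
      linarith
    linarith
  · push Not at h
    have h3 : x ^ (p - 2) ≤ K ^ (p / 2 - 1) * y ^ (p - 2) := by
      have e : ∀ w : ℝ, 0 ≤ w → w ^ (p - 2) = (w ^ 2) ^ (p / 2 - 1) := by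
        intro w hw
        rw [← Real.rpow_natCast w 2, ← Real.rpow_mul hw]
        congr 1; push_cast; ring
      rw [e x hx, e y hy, ← Real.mul_rpow hK0.le (by positivity)]
      exact Real.rpow_le_rpow (by positivity) h.le (by linarith)
    have : x ^ (p - 2) * y ^ 2 ≤ K ^ (p / 2 - 1) * y ^ p := by
      rw [hsplit y hy, ← mul_assoc]
      exact mul_le_mul_of_nonneg_right h3 (by positivity)
    linarith

lemma aux_interp {w t : ℝ} (hw : 0 ≤ w) (h1 : 1 ≤ t) (h2 : t ≤ 2) :
    w ^ t ≤ 1 + t * (w - 1) + (t - 1) * (w - 1) ^ 2 := by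
  have := Real.geom_mean_le_arith_mean2_weighted (w₁ := 2 - t) (w₂ := t - 1) (p₁ := w) (p₂ := w ^ 2)
    (by linarith) (by linarith) hw (by positivity) (by ring)
  have e : w ^ t = w ^ (2 - t) * (w ^ 2) ^ (t - 1) := by
    rw [← Real.rpow_natCast w 2, ← Real.rpow_mul hw,
      ← Real.rpow_add_of_nonneg hw (by linarith) (by push_cast; linarith)]
    congr 1; push_cast; ring
  rw [e]
  nlinarith

lemma aux_step {E : Type*} [NormedAddCommGroup E] [InnerProductSpace ℝ E] (a b : E) {p : ℝ}
    (hp : 2 ≤ p) (hp4 : p ≤ 4) :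
    ‖a + b‖ ^ p ≤ ‖a‖ ^ p + p * (‖a‖ ^ (p - 2) * inner ℝ a b)
      + 20 * (‖a‖ ^ (p - 2) * ‖b‖ ^ 2 + ‖b‖ ^ p) := by
  have hsplit : ∀ w : ℝ, 0 ≤ w → w ^ p = w ^ (p - 2) * w ^ 2 := by
    intro w hw
    rw [← Real.rpow_natCast w 2, ← Real.rpow_add_of_nonneg hw (by linarith) (by norm_num)]
    congr 1; push_cast; ring
  have e : ∀ w : ℝ, 0 ≤ w → w ^ p = (w ^ 2) ^ (p / 2) := by
    intro w hw
    rw [← Real.rpow_natCast w 2, ← Real.rpow_mul hw]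
    congr 1; push_cast; ring
  have hin := abs_real_inner_le_norm a b
  have ha := norm_nonneg a
  have hb := norm_nonneg b
  by_cases h : ‖b‖ ≤ ‖a‖
  · rcases ha.eq_or_lt with h0 | h0
    · have ha0 : a = 0 := norm_eq_zero.mp h0.symm
      have hb0 : b = 0 := norm_eq_zero.mp (by linarith)
      subst ha0; subst hb0
      simp [Real.zero_rpow (show p ≠ 0 by linarith)]
    · set A := ‖a‖
      set B := ‖b‖
      set i := inner ℝ a b
      have hsq : ‖a + b‖ ^ 2 = A ^ 2 + 2 * i + B ^ 2 := norm_add_sq_real a b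
      have hw : (‖a + b‖ ^ 2 / A ^ 2) ^ (p / 2) ≤ _ :=
        aux_interp (w := ‖a + b‖ ^ 2 / A ^ 2) (t := p / 2) (by positivity) (by linarith) (by linarith)
      rw [Real.div_rpow (by positivity) (by positivity), ← e _ (norm_nonneg _), ← e _ ha,
        div_le_iff₀ (by positivity)] at hw
      refine hw.trans ?_
      have hx : ‖a + b‖ ^ 2 / A ^ 2 - 1 = (2 * i + B ^ 2) / A ^ 2 := by
        rw [hsq]; field_simp; ring
      rw [hx, hsplit A ha]
      set P := A ^ (p - 2)
      have hP : 0 ≤ P := by positivity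
      have hBp : 0 ≤ B ^ p := by positivity
      have e1 : (1 + p / 2 * ((2 * i + B ^ 2) / A ^ 2) + (p / 2 - 1) * ((2 * i + B ^ 2) / A ^ 2) ^ 2)
          * (P * A ^ 2) = P * A ^ 2 + p * (P * i) + P * (p / 2 * B ^ 2
            + (p / 2 - 1) * ((2 * i + B ^ 2) ^ 2 / A ^ 2)) := by
        field_simp; ring
      rw [e1]
      have h9 : (2 * i + B ^ 2) ^ 2 / A ^ 2 ≤ 9 * B ^ 2 := by
        rw [div_le_iff₀ (by positivity)]
        have : |2 * i + B ^ 2| ≤ 3 * (A * B) := by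
          rw [abs_le] at hin ⊢
          constructor <;> nlinarith
        calc (2 * i + B ^ 2) ^ 2 = |2 * i + B ^ 2| ^ 2 := (sq_abs _).symm
          _ ≤ (3 * (A * B)) ^ 2 := by gcongr
          _ = _ := by ring
      have h0' : 0 ≤ (2 * i + B ^ 2) ^ 2 / A ^ 2 := by positivity
      have : p / 2 * B ^ 2 + (p / 2 - 1) * ((2 * i + B ^ 2) ^ 2 / A ^ 2) ≤ 20 * B ^ 2 := by
        nlinarith [sq_nonneg B]
      nlinarith [mul_le_mul_of_nonneg_left this hP]
  · push Not at h
    have h1 : ‖a + b‖ ^ p ≤ 16 * ‖b‖ ^ p := by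
      calc ‖a + b‖ ^ p ≤ (2 * ‖b‖) ^ p :=
            Real.rpow_le_rpow (norm_nonneg _) (by linarith [norm_add_le a b]) (by linarith)
        _ = 2 ^ p * ‖b‖ ^ p := Real.mul_rpow (by norm_num) hb
        _ ≤ 2 ^ (4:ℝ) * ‖b‖ ^ p := by gcongr; norm_num
        _ = _ := by norm_num
    have h2 : |‖a‖ ^ (p - 2) * inner ℝ a b| ≤ ‖b‖ ^ p := by
      rw [abs_mul, abs_of_nonneg (by positivity), hsplit _ hb]
      gcongr
      nlinarith
    have h3 : 0 ≤ ‖a‖ ^ p := by positivity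
    have h4 : 0 ≤ ‖a‖ ^ (p - 2) * ‖b‖ ^ 2 := by positivity
    have h5 : 0 ≤ ‖b‖ ^ p := by positivity
    have h6 := (abs_le.mp h2).1
    nlinarith

lemma aux_step2 {E : Type*} [NormedAddCommGroup E] [InnerProductSpace ℝ E] (a b : E) {p K : ℝ}
    (hp : 2 ≤ p) (hp4 : p ≤ 4) (hK : 1 ≤ K) :
    ‖a + b‖ ^ p ≤ (1 + 20 / K) * ‖a‖ ^ p + p * (‖a‖ ^ (p - 2) * inner ℝ a b)
      + 40 * K ^ (p / 2 - 1) * ‖b‖ ^ p := by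
  have h1 := aux_step a b hp hp4
  have h2 := aux_xy (norm_nonneg a) (norm_nonneg b) hK hp
  have h3 : ‖b‖ ^ p ≤ K ^ (p / 2 - 1) * ‖b‖ ^ p :=
    le_mul_of_one_le_left (by positivity) (Real.one_le_rpow hK (by linarith))
  have : (1 + 20 / K) * ‖a‖ ^ p = ‖a‖ ^ p + 20 * (‖a‖ ^ p / K) := by ring
  rw [this]
  linarith

lemma aux_cross {x y p : ℝ} (hx : 0 ≤ x) (hy : 0 ≤ y) (hp : 2 ≤ p) :
    x ^ (p - 2) * (x * y) ≤ x ^ p + y ^ p := by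
  have hsplit : ∀ w : ℝ, 0 ≤ w → w ^ p = w ^ (p - 2) * (w * w) := by
    intro w hw
    rw [← sq, ← Real.rpow_natCast w 2, ← Real.rpow_add_of_nonneg hw (by linarith) (by norm_num)]
    congr 1; push_cast; ring
  have h1 : 0 ≤ x ^ p := by positivity
  have h2 : 0 ≤ y ^ p := by positivity
  rcases le_total x y with h | h
  · have : x ^ (p - 2) * (x * y) ≤ y ^ p := by
      rw [hsplit y hy]; gcongr
    linarith
  · have : x ^ (p - 2) * (x * y) ≤ x ^ p := by
      rw [hsplit x hx]; gcongr
    linarith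

lemma aux_add_rpow {x y p : ℝ} (hx : 0 ≤ x) (hy : 0 ≤ y) (hp : 2 ≤ p) (hp4 : p ≤ 4) :
    (x + y) ^ p ≤ 16 * (x ^ p + y ^ p) := by
  have key : ∀ w : ℝ, 0 ≤ w → (2 * w) ^ p ≤ 16 * w ^ p := by
    intro w hw
    calc (2 * w) ^ p = 2 ^ p * w ^ p := Real.mul_rpow (by norm_num) hw
        _ ≤ 2 ^ (4:ℝ) * w ^ p := by gcongr; norm_num
        _ = _ := by norm_num
  have h1 : 0 ≤ x ^ p := by positivity
  have h2 : 0 ≤ y ^ p := by positivity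
  rcases le_total x y with h | h
  · have := (Real.rpow_le_rpow (by positivity) (by linarith : x + y ≤ 2 * y) (by linarith : 0 ≤ p)).trans (key y hy)
    linarith
  · have := (Real.rpow_le_rpow (by positivity) (by linarith : x + y ≤ 2 * x) (by linarith : 0 ≤ p)).trans (key x hx)
    linarith

/-- pointwise bounds -/
lemma aux_T2 {H U C p : ℝ} (hH : 0 ≤ H) (hU : 0 < U) (hC : 0 ≤ C) (hHU : H ≤ C * U)
    (hp : 2 ≤ p) (hp4 : p ≤ 4) :
    (|1 - U| / U * H) ^ 2 ≤ (4 + 16 * C ^ 2) * (H ^ p + |1 - U| ^ p) := by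
  have hsplit : ∀ w : ℝ, 0 ≤ w → w ^ p = w ^ 2 * w ^ (p - 2) := by
    intro w hw
    rw [← Real.rpow_natCast w 2, ← Real.rpow_add_of_nonneg hw (by norm_num) (by linarith)]
    congr 1; push_cast; ring
  have hHp : 0 ≤ H ^ p := by positivity
  have hv : 0 ≤ |1 - U| := abs_nonneg _
  have hVp : 0 ≤ |1 - U| ^ p := by positivity
  by_cases h : U < 1 / 2
  · have h1 : |1 - U| ≤ 1 := by rw [abs_of_pos (by linarith)]; linarith
    have h2 : 1 / 2 ≤ |1 - U| := by rw [abs_of_pos (by linarith)]; linarith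
    have h3 : 1 ≤ 16 * |1 - U| ^ p := by
      have : (1/16 : ℝ) ≤ |1 - U| ^ p := by
        calc (1/16 : ℝ) = (1/2) ^ (4:ℝ) := by norm_num
          _ ≤ (1/2) ^ p := Real.rpow_le_rpow_of_exponent_ge (by norm_num) (by norm_num) hp4
          _ ≤ _ := Real.rpow_le_rpow (by norm_num) h2 (by linarith)
      linarith
    have h4 : |1 - U| / U * H ≤ C := by
      rw [div_mul_eq_mul_div, div_le_iff₀ hU]
      nlinarith
    calc (|1 - U| / U * H) ^ 2 ≤ C ^ 2 := by gcongr
      _ ≤ C ^ 2 * (16 * |1 - U| ^ p) := le_mul_of_one_le_right (by positivity) h3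
      _ ≤ _ := by nlinarith [mul_nonneg (sq_nonneg C) hHp]
  · push Not at h
    set w := |1 - U| / U with hw
    have hw0 : 0 ≤ w := by positivity
    have hw1 : w ≤ 1 := by
      rw [hw, div_le_one hU, abs_le]; constructor <;> linarith
    have hw2 : w ≤ 2 * |1 - U| := by
      rw [hw, div_le_iff₀ hU]; nlinarith
    have h5 : w ^ 2 ≤ 4 * |1 - U| ^ (p - 2) := by
      rw [← Real.rpow_natCast w 2]
      calc w ^ ((2:ℕ):ℝ) ≤ w ^ (p - 2) := by
            rcases hw0.eq_or_lt with h0 | h0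
            · rw [← h0, Real.zero_rpow (by norm_num)]; positivity
            · exact Real.rpow_le_rpow_of_exponent_ge h0 hw1 (by push_cast; linarith)
        _ ≤ (2 * |1 - U|) ^ (p - 2) := Real.rpow_le_rpow hw0 hw2 (by linarith)
        _ = 2 ^ (p - 2) * |1 - U| ^ (p - 2) := Real.mul_rpow (by norm_num) hv
        _ ≤ 2 ^ (2:ℝ) * |1 - U| ^ (p - 2) := by
            gcongr
            · norm_num
            · linarith
        _ = _ := by norm_num
    have h6 : H ^ 2 * |1 - U| ^ (p - 2) ≤ H ^ p + |1 - U| ^ p := by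
      rcases le_total H |1 - U| with h7 | h7
      · have : H ^ 2 * |1 - U| ^ (p - 2) ≤ |1 - U| ^ p := by rw [hsplit _ hv]; gcongr
        linarith
      · have : H ^ 2 * |1 - U| ^ (p - 2) ≤ H ^ p := by
          rw [hsplit _ hH]; gcongr
        linarith
    calc (w * H) ^ 2 = w ^ 2 * H ^ 2 := by ring
      _ ≤ (4 * |1 - U| ^ (p - 2)) * H ^ 2 := by gcongr
      _ = 4 * (H ^ 2 * |1 - U| ^ (p - 2)) := by ring
      _ ≤ 4 * (H ^ p + |1 - U| ^ p) := by gcongr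
      _ ≤ _ := by
        gcongr
        nlinarith [sq_nonneg C]

lemma aux_T1 {H U C : ℝ} (hH : 0 ≤ H) (hU : 0 < U) (hC : 0 ≤ C) (hHU : H ≤ C * U) :
    |1 - U| / U * H ≤ (1 + 2 * C) * (H ^ 2 + |1 - U| ^ 2) := by
  have hv : 0 ≤ |1 - U| := abs_nonneg _
  by_cases h : U < 1 / 2
  · have h2 : 1 / 2 ≤ |1 - U| := by rw [abs_of_pos (by linarith)]; linarith
    have h4 : |1 - U| / U * H ≤ |1 - U| * C := by
      rw [div_mul_eq_mul_div, div_le_iff₀ hU]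
      nlinarith
    have : |1 - U| * C ≤ 2 * C * |1 - U| ^ 2 := by nlinarith [mul_nonneg hv hC]
    nlinarith [sq_nonneg H, mul_nonneg hC (sq_nonneg H), sq_nonneg |1 - U|]
  · push Not at h
    have hw2 : |1 - U| / U ≤ 2 * |1 - U| := by
      rw [div_le_iff₀ hU]; nlinarith
    have := mul_le_mul_of_nonneg_right hw2 hH
    nlinarith [sq_nonneg (H - |1 - U|), mul_nonneg hC (sq_nonneg H), mul_nonneg hC (sq_nonneg |1 - U|)]

section MZ
variable {E : Type*} [NormedAddCommGroup E] [InnerProductSpace ℝ E] [CompleteSpace E]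
  [MeasurableSpace E] [BorelSpace E] [SecondCountableTopology E]

lemma mz_step {Ω 𝒵 : Type*} [MeasurableSpace Ω] [MeasurableSpace 𝒵] (Q : Measure 𝒵)
    (P : Measure Ω) [IsProbabilityMeasure P] [IsProbabilityMeasure Q]
    (S : Ω → E) (hS : Measurable S) (Y : 𝒵 → E) (hY : Measurable Y) {p K : ℝ}
    (hp : 2 ≤ p) (hp4 : p ≤ 4) (hK : 1 ≤ K)
    (hSp : Integrable (fun w => ‖S w‖ ^ p) P) (hYp : Integrable (fun z => ‖Y z‖ ^ p) Q)
    (hY0 : ∫ z, Y z ∂Q = 0) (hYi : Integrable Y Q) :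
    Integrable (fun w : 𝒵 × Ω => ‖S w.2 + Y w.1‖ ^ p) (Q.prod P) ∧
    ∫ w : 𝒵 × Ω, ‖S w.2 + Y w.1‖ ^ p ∂(Q.prod P) ≤
      (1 + 20 / K) * ∫ w, ‖S w‖ ^ p ∂P + 40 * K ^ (p / 2 - 1) * ∫ z, ‖Y z‖ ^ p ∂Q := by
  have i1 : Integrable (fun w : 𝒵 × Ω => ‖S w.2‖ ^ p) (Q.prod P) := hSp.comp_snd Q
  have i2 : Integrable (fun w : 𝒵 × Ω => ‖Y w.1‖ ^ p) (Q.prod P) := hYp.comp_fst P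
  have mS : Measurable (fun w : 𝒵 × Ω => S w.2) := hS.comp measurable_snd
  have mY : Measurable (fun w : 𝒵 × Ω => Y w.1) := hY.comp measurable_fst
  have i3 : Integrable (fun w : 𝒵 × Ω => ‖S w.2‖ ^ (p - 2) * inner ℝ (S w.2) (Y w.1)) (Q.prod P) := by
    refine (i1.add i2).mono' ?_ ?_
    · exact ((mS.norm.pow_const _).mul (mS.inner mY)).aestronglyMeasurable
    · refine Filter.Eventually.of_forall fun w => ?_
      simp only [Pi.add_apply]
      rw [Real.norm_eq_abs, abs_mul, abs_of_nonneg (by positivity)]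
      refine le_trans ?_ (aux_cross (norm_nonneg _) (norm_nonneg _) hp)
      gcongr
      exact abs_real_inner_le_norm _ _
  have i4 : Integrable (fun w : 𝒵 × Ω => ‖S w.2 + Y w.1‖ ^ p) (Q.prod P) := by
    refine ((i1.add i2).const_mul 16).mono' ?_ ?_
    · exact ((mS.add mY).norm.pow_const _).aestronglyMeasurable
    · refine Filter.Eventually.of_forall fun w => ?_
      simp only [Pi.add_apply]
      rw [Real.norm_eq_abs, abs_of_nonneg (by positivity)]
      exact (Real.rpow_le_rpow (norm_nonneg _) (norm_add_le _ _) (by linarith)).trans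
        (aux_add_rpow (norm_nonneg _) (norm_nonneg _) hp hp4)
  refine ⟨i4, ?_⟩
  have c0 : ∫ w : 𝒵 × Ω, ‖S w.2‖ ^ (p - 2) * inner ℝ (S w.2) (Y w.1) ∂(Q.prod P) = 0 := by
    rw [integral_prod_symm _ i3]
    simp only [integral_const_mul]
    simp only [integral_inner hYi, hY0, inner_zero_right, mul_zero, integral_zero]
  have e1 : ∫ w : 𝒵 × Ω, ‖S w.2‖ ^ p ∂(Q.prod P) = ∫ w, ‖S w‖ ^ p ∂P := by
    rw [integral_fun_snd (μ := Q) (ν := P) (fun w => ‖S w‖ ^ p)]; simp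
  have e2 : ∫ w : 𝒵 × Ω, ‖Y w.1‖ ^ p ∂(Q.prod P) = ∫ w, ‖Y w‖ ^ p ∂Q := by
    rw [integral_fun_fst (μ := Q) (ν := P) (fun w => ‖Y w‖ ^ p)]; simp
  calc ∫ w : 𝒵 × Ω, ‖S w.2 + Y w.1‖ ^ p ∂(Q.prod P)
      ≤ ∫ w : 𝒵 × Ω, ((1 + 20 / K) * ‖S w.2‖ ^ p
          + p * (‖S w.2‖ ^ (p - 2) * inner ℝ (S w.2) (Y w.1))
          + 40 * K ^ (p / 2 - 1) * ‖Y w.1‖ ^ p) ∂(Q.prod P) :=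
        integral_mono i4 (((i1.const_mul _).add (i3.const_mul _)).add (i2.const_mul _))
          (fun w => aux_step2 _ _ hp hp4 hK)
    _ = _ := by
      rw [integral_add ((i1.const_mul _).fun_add (i3.const_mul _)) (i2.const_mul _),
        integral_add (i1.const_mul _) (i3.const_mul _), integral_const_mul, integral_const_mul,
        integral_const_mul, c0, e1, e2]
      ring

lemma mz_rec {𝒵 : Type*} [MeasurableSpace 𝒵] (Q : Measure 𝒵) [IsProbabilityMeasure Q]
    (Y : 𝒵 → E) (hY : Measurable Y) {p K : ℝ}
    (hp : 2 ≤ p) (hp4 : p ≤ 4) (hK : 1 ≤ K)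
    (hYp : Integrable (fun z => ‖Y z‖ ^ p) Q)
    (hY0 : ∫ z, Y z ∂Q = 0) (hYi : Integrable Y Q) (n : ℕ) :
    Integrable (fun zs : Fin n → 𝒵 => ‖∑ k, Y (zs k)‖ ^ p) (Measure.pi fun _ => Q) ∧
    ∫ zs : Fin n → 𝒵, ‖∑ k, Y (zs k)‖ ^ p ∂(Measure.pi fun _ => Q) ≤
      (1 + 20 / K) ^ n * n * (40 * K ^ (p / 2 - 1) * ∫ z, ‖Y z‖ ^ p ∂Q) := by
  induction n with
  | zero => simp [Real.zero_rpow (show p ≠ 0 by linarith)]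
  | succ n ih =>
    have mp := measurePreserving_piFinSuccAbove (fun _ : Fin (n + 1) => Q) 0
    have hS : Measurable (fun zs : Fin n → 𝒵 => ∑ k, Y (zs k)) :=
      Finset.measurable_sum _ fun k _ => hY.comp (measurable_pi_apply k)
    have st := mz_step Q (Measure.pi fun _ : Fin n => Q) _ hS Y hY hp hp4 hK ih.1 hYp hY0 hYi
    have heq : (fun zs : Fin (n + 1) → 𝒵 => ‖∑ k, Y (zs k)‖ ^ p)
        = (fun w : 𝒵 × (Fin n → 𝒵) => ‖(∑ k, Y (w.2 k)) + Y w.1‖ ^ p) ∘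
          (MeasurableEquiv.piFinSuccAbove (fun _ : Fin (n + 1) => 𝒵) 0) := by
      funext zs
      simp [Fin.sum_univ_succ, add_comm, MeasurableEquiv.piFinSuccAbove, Fin.insertNthEquiv,
        Fin.tail]
    rw [heq]
    refine ⟨(mp.integrable_comp_emb (MeasurableEquiv.measurableEmbedding _)).2 st.1, ?_⟩
    have := mp.integral_comp' (fun w : 𝒵 × (Fin n → 𝒵) => ‖(∑ k, Y (w.2 k)) + Y w.1‖ ^ p)
    simp only [Function.comp_def]
    rw [this]
    refine st.2.trans ?_
    set m := 40 * K ^ (p / 2 - 1) * ∫ z, ‖Y z‖ ^ p ∂Q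
    have hm : 0 ≤ m := by
      have : 0 ≤ ∫ z, ‖Y z‖ ^ p ∂Q := integral_nonneg fun z => by positivity
      positivity
    have hK' : 0 ≤ 20 / K := by positivity
    have hpow : 1 ≤ (1 + 20 / K) ^ (n + 1) := one_le_pow₀ (by linarith)
    have := mul_le_mul_of_nonneg_left ih.2 (by linarith : 0 ≤ 1 + 20 / K)
    have h2 := mul_le_mul_of_nonneg_right hpow hm
    push_cast
    rw [pow_succ] at *
    nlinarith

/-- constant for Marcinkiewicz–Zygmund -/
def mzC : ℝ := 40 * Real.exp 20

lemma mz_bound {𝒵 : Type*} [MeasurableSpace 𝒵] (Q : Measure 𝒵) [IsProbabilityMeasure Q]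
    (Y : 𝒵 → E) (hY : Measurable Y) {p : ℝ}
    (hp : 2 ≤ p) (hp4 : p ≤ 4)
    (hYp : Integrable (fun z => ‖Y z‖ ^ p) Q)
    (hY0 : ∫ z, Y z ∂Q = 0) (hYi : Integrable Y Q) (n : ℕ) (hn : 1 ≤ n) :
    Integrable (fun zs : Fin n → 𝒵 => ‖(n : ℝ)⁻¹ • ∑ k, Y (zs k)‖ ^ p) (Measure.pi fun _ => Q) ∧
    ∫ zs : Fin n → 𝒵, ‖(n : ℝ)⁻¹ • ∑ k, Y (zs k)‖ ^ p ∂(Measure.pi fun _ => Q) ≤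
      mzC * (n : ℝ) ^ (-(p / 2)) * ∫ z, ‖Y z‖ ^ p ∂Q := by
  have hn1 : (1 : ℝ) ≤ n := by exact_mod_cast hn
  have hn0 : (0 : ℝ) < n := by linarith
  obtain ⟨h1, h2⟩ := mz_rec Q Y hY hp hp4 hn1 hYp hY0 hYi n
  have e : ∀ zs : Fin n → 𝒵, ‖(n : ℝ)⁻¹ • ∑ k, Y (zs k)‖ ^ p
      = (n : ℝ) ^ (-p) * ‖∑ k, Y (zs k)‖ ^ p := by
    intro zs
    rw [norm_smul, Real.mul_rpow (norm_nonneg _) (norm_nonneg _), norm_inv, Real.norm_natCast,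
      Real.inv_rpow hn0.le, Real.rpow_neg hn0.le]
  simp only [e]
  refine ⟨h1.const_mul _, ?_⟩
  rw [integral_const_mul]
  have hm : 0 ≤ ∫ z, ‖Y z‖ ^ p ∂Q := integral_nonneg fun z => by positivity
  have hexp : (1 + 20 / (n : ℝ)) ^ n ≤ Real.exp 20 := by
    calc (1 + 20 / (n : ℝ)) ^ n ≤ (Real.exp (20 / n)) ^ n := by
          gcongr
          linarith [Real.add_one_le_exp (20 / (n : ℝ))]
      _ = Real.exp 20 := by
          rw [← Real.exp_nat_mul]; congr 1; field_simp
  calc (n : ℝ) ^ (-p) * ∫ zs : Fin n → 𝒵, ‖∑ k, Y (zs k)‖ ^ p ∂(Measure.pi fun _ => Q)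
      ≤ (n : ℝ) ^ (-p) * (Real.exp 20 * n * (40 * (n : ℝ) ^ (p / 2 - 1) * ∫ z, ‖Y z‖ ^ p ∂Q)) := by
        gcongr
        refine h2.trans ?_
        gcongr
    _ = 40 * Real.exp 20 * ((n : ℝ) ^ (-p) * ((n : ℝ) * (n : ℝ) ^ (p / 2 - 1))) * ∫ z, ‖Y z‖ ^ p ∂Q := by ring
    _ = _ := by
        have : (n : ℝ) ^ (-p) * ((n : ℝ) * (n : ℝ) ^ (p / 2 - 1)) = (n : ℝ) ^ (-(p / 2)) := by
          nth_rewrite 2 [← Real.rpow_one (n : ℝ)]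
          rw [← Real.rpow_add hn0, ← Real.rpow_add hn0]
          congr 1; ring
        rw [this]; rfl

end MZ

lemma pi_reindex {𝒵 : Type*} [MeasurableSpace 𝒵] (Q : Measure 𝒵) [IsProbabilityMeasure Q]
    {m n : ℕ} (f : Fin m → Fin n) (hf : Function.Injective f) :
    MeasurePreserving (fun (zs : Fin n → 𝒵) k => zs (f k)) (Measure.pi fun _ => Q)
      (Measure.pi fun _ => Q) := by
  have hI : iIndepFun (fun (i : Fin n) (zs : Fin n → 𝒵) => zs i) (Measure.pi fun _ => Q) :=
    iIndepFun_pi (μ := fun _ : Fin n => Q) (X := fun _ z => z) (fun i => aemeasurable_id)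
  have h2 := (hI.precomp hf).map_fun_eq_pi_map
    (fun i => (measurable_pi_apply (f i)).aemeasurable)
  refine ⟨measurable_pi_lambda _ fun k => measurable_pi_apply _, ?_⟩
  rw [h2]
  congr 1
  funext i
  exact (measurePreserving_eval (fun _ : Fin n => Q) (f i)).map_eq

lemma measurable_piK {𝒳 𝒵 : Type*} [MeasurableSpace 𝒳] [MeasurableSpace 𝒵] (q : Kernel 𝒳 𝒵)
    [IsMarkovKernel q] (n : ℕ) : Measurable (fun x => Measure.pi fun _ : Fin n => q x) := by
  apply Measurable.measure_of_isPiSystem_of_isProbabilityMeasure generateFrom_pi.symm isPiSystem_pi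
  rintro s ⟨t, ht, rfl⟩
  simp only [Measure.pi_pi]
  refine Finset.measurable_prod _ fun i _ => ?_
  exact q.measurable_coe (ht i (Set.mem_univ i))

section fixed
variable {E : Type*} [NormedAddCommGroup E] [InnerProductSpace ℝ E] [CompleteSpace E]
  [MeasurableSpace E] [BorelSpace E] [SecondCountableTopology E]
  {𝒵 : Type*} [MeasurableSpace 𝒵]

/-- ratio estimator at fixed parameter -/
def rat (u : 𝒵 → ℝ) (g : 𝒵 → E) {n : ℕ} (zs : Fin n → 𝒵) : E :=
  (∑ k, u (zs k))⁻¹ • ∑ k, g (zs k)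

/-- remainder -/
def remT (u : 𝒵 → ℝ) (g : 𝒵 → E) (G : E) {n : ℕ} (zs : Fin n → 𝒵) : E :=
  rat u g zs - G - (n : ℝ)⁻¹ • ∑ k, (g (zs k) - u (zs k) • G)

lemma rat_meas {u : 𝒵 → ℝ} {g : 𝒵 → E} (hu : Measurable u) (hg : Measurable g) (n : ℕ) :
    Measurable (fun zs : Fin n → 𝒵 => rat u g zs) :=
  (Finset.measurable_sum _ fun k _ => hu.comp (measurable_pi_apply k)).inv.smul
    (Finset.measurable_sum _ fun k _ => hg.comp (measurable_pi_apply k))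

lemma rat_bound {u : 𝒵 → ℝ} {g : 𝒵 → E} {C : ℝ} (hC : 0 ≤ C) (hpos : ∀ z, 0 < u z)
    (hb : ∀ z, ‖g z‖ ≤ C * u z) {n : ℕ} (zs : Fin n → 𝒵) : ‖rat u g zs‖ ≤ C := by
  have h0 : 0 ≤ ∑ k, u (zs k) := Finset.sum_nonneg fun k _ => (hpos _).le
  have h1 : ‖∑ k, g (zs k)‖ ≤ C * ∑ k, u (zs k) := by
    rw [Finset.mul_sum]
    exact norm_sum_le_of_le _ fun k _ => hb _
  rw [rat, norm_smul, norm_inv, Real.norm_eq_abs, abs_of_nonneg h0]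
  rcases h0.eq_or_lt with h | h
  · rw [← h]; simpa using hC
  · rw [inv_mul_le_iff₀ h]; linarith

lemma remT_norm {u : 𝒵 → ℝ} {g : 𝒵 → E} {G : E} (hpos : ∀ z, 0 < u z)
    {n : ℕ} (hn : 1 ≤ n) (zs : Fin n → 𝒵) :
    ‖remT u g G zs‖ = |1 - (n : ℝ)⁻¹ * ∑ k, u (zs k)| / ((n : ℝ)⁻¹ * ∑ k, u (zs k))
      * ‖(n : ℝ)⁻¹ • ∑ k, (g (zs k) - u (zs k) • G)‖ := by
  have hn0 : (0 : ℝ) < n := by exact_mod_cast hn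
  have : Nonempty (Fin n) := ⟨⟨0, hn⟩⟩
  have hS : 0 < ∑ k, u (zs k) := Finset.sum_pos (fun k _ => hpos _) Finset.univ_nonempty
  have e : remT u g G zs = ((1 - (n : ℝ)⁻¹ * ∑ k, u (zs k)) / ((n : ℝ)⁻¹ * ∑ k, u (zs k))) •
      ((n : ℝ)⁻¹ • ∑ k, (g (zs k) - u (zs k) • G)) := by
    rw [remT, rat, Finset.sum_sub_distrib, ← Finset.sum_smul]
    set S := ∑ k, u (zs k)
    set g' := ∑ k, g (zs k)
    have h1 : G = (S⁻¹ * S) • G := by rw [inv_mul_cancel₀ hS.ne', one_smul]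
    nth_rewrite 1 [h1]
    rw [mul_smul, ← smul_sub, ← sub_smul, smul_smul]
    congr 1
    field_simp
  rw [e, norm_smul, Real.norm_eq_abs, abs_div, abs_of_pos (a := (n : ℝ)⁻¹ * _) (by positivity)]

lemma rpow_le_one_add {w p s : ℝ} (hw : 0 ≤ w) (hp : 0 ≤ p) (hps : p ≤ s) : w ^ p ≤ 1 + w ^ s := by
  have h2 : 0 ≤ w ^ s := by positivity
  rcases le_total w 1 with h | h
  · have := Real.rpow_le_one hw h hp
    linarith
  · have := Real.rpow_le_rpow_of_exponent_le h hps
    linarith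

lemma fixed_main (Q : Measure 𝒵) [IsProbabilityMeasure Q] {u : 𝒵 → ℝ} {g : 𝒵 → E} {G : E}
    {C s p : ℝ} (hC : 0 ≤ C) (hum : Measurable u) (hgm : Measurable g) (hpos : ∀ z, 0 < u z)
    (hb : ∀ z, ‖g z‖ ≤ C * u z) (hu1 : ∫ z, u z ∂Q = 1) (hG : ∫ z, g z ∂Q = G)
    (hus : Integrable (fun z => u z ^ s) Q) (hp : 2 ≤ p) (hp4 : p ≤ 4) (hps : p ≤ s)
    (n : ℕ) (hn : 1 ≤ n) :
    Integrable (fun zs : Fin n → 𝒵 => ‖(n : ℝ)⁻¹ • ∑ k, (g (zs k) - u (zs k) • G)‖ ^ p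
      + |1 - (n : ℝ)⁻¹ * ∑ k, u (zs k)| ^ p) (Measure.pi fun _ => Q) ∧
    (∫ zs : Fin n → 𝒵, (‖(n : ℝ)⁻¹ • ∑ k, (g (zs k) - u (zs k) • G)‖ ^ p
      + |1 - (n : ℝ)⁻¹ * ∑ k, u (zs k)| ^ p) ∂(Measure.pi fun _ => Q)) ≤
      mzC * ((1 + 2 * C) ^ 4 + 32) * (n : ℝ) ^ (-(p / 2)) * (1 + ∫ z, u z ^ s ∂Q) ∧
    (∀ zs : Fin n → 𝒵, ‖(n : ℝ)⁻¹ • ∑ k, (g (zs k) - u (zs k) • G)‖ ≤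
      2 * C * ((n : ℝ)⁻¹ * ∑ k, u (zs k))) ∧
    (∫ zs : Fin n → 𝒵, ((n : ℝ)⁻¹ • ∑ k, (g (zs k) - u (zs k) • G)) ∂(Measure.pi fun _ => Q)) = 0 ∧
    Integrable (fun zs : Fin n → 𝒵 => ((n : ℝ)⁻¹ • ∑ k, (g (zs k) - u (zs k) • G)))
      (Measure.pi fun _ => Q) := by
  have hn0 : (0 : ℝ) < n := by exact_mod_cast hn
  have iu : Integrable u Q := integrable_of_integral_eq_one hu1
  have ig : Integrable g Q := (iu.const_mul C).mono' hgm.aestronglyMeasurable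
    (Filter.Eventually.of_forall hb)
  have hGC : ‖G‖ ≤ C := by
    rw [← hG]
    refine (norm_integral_le_of_norm_le (iu.const_mul C) (Filter.Eventually.of_forall hb)).trans ?_
    rw [integral_const_mul, hu1, mul_one]
  have hmeas : Measurable (fun z => g z - u z • G) := hgm.sub (hum.smul_const G)
  have hh : ∀ z, ‖g z - u z • G‖ ≤ 2 * C * u z := by
    intro z
    have h1 : ‖u z • G‖ ≤ C * u z := by
      rw [norm_smul, Real.norm_eq_abs, abs_of_pos (hpos z), mul_comm]
      exact mul_le_mul_of_nonneg_right hGC (hpos z).le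
    linarith [norm_sub_le (g z) (u z • G), hb z]
  have ih : Integrable (fun z => g z - u z • G) Q := ig.sub (iu.smul_const G)
  have h0 : ∫ z, (g z - u z • G) ∂Q = 0 := by
    rw [integral_sub ig (iu.smul_const G), integral_smul_const, hu1, hG, one_smul, sub_self]
  have iW : Integrable (fun z => 1 + u z ^ s) Q := (integrable_const _).add hus
  have hW : ∫ z, (1 + u z ^ s) ∂Q = 1 + ∫ z, u z ^ s ∂Q := by
    rw [integral_add (integrable_const _) hus]; simp
  have bh : ∀ z, ‖g z - u z • G‖ ^ p ≤ (1 + 2 * C) ^ 4 * (1 + u z ^ s) := by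
    intro z
    have hus0 : 0 ≤ u z ^ s := Real.rpow_nonneg (hpos z).le _
    calc ‖g z - u z • G‖ ^ p ≤ ((1 + 2 * C) * u z) ^ p := by
          refine Real.rpow_le_rpow (norm_nonneg _) ((hh z).trans ?_) (by linarith)
          nlinarith [hpos z]
      _ = (1 + 2 * C) ^ p * u z ^ p := Real.mul_rpow (by linarith) (hpos z).le
      _ ≤ (1 + 2 * C) ^ (4 : ℝ) * (1 + u z ^ s) := by
          have := rpow_le_one_add (hpos z).le (by linarith : 0 ≤ p) hps
          have h2 : (1 + 2 * C) ^ p ≤ (1 + 2 * C) ^ (4 : ℝ) :=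
            Real.rpow_le_rpow_of_exponent_le (by linarith) hp4
          gcongr
          exact Real.rpow_nonneg (hpos z).le _
      _ = _ := by norm_num
  have by1 : ∀ z, ‖1 - u z‖ ^ p ≤ 32 * (1 + u z ^ s) := by
    intro z
    have hus0 : 0 ≤ u z ^ s := Real.rpow_nonneg (hpos z).le _
    have h1 := rpow_le_one_add (hpos z).le (by linarith : 0 ≤ p) hps
    have h2 := aux_add_rpow (zero_le_one) (hpos z).le hp hp4
    have h3 : ‖1 - u z‖ ^ p ≤ (1 + u z) ^ p := by
      refine Real.rpow_le_rpow (norm_nonneg _) ?_ (by linarith)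
      rw [Real.norm_eq_abs, abs_le]; constructor <;> linarith [hpos z]
    rw [Real.one_rpow] at h2
    linarith
  have ihp : Integrable (fun z => ‖g z - u z • G‖ ^ p) Q := by
    refine (iW.const_mul _).mono' (hmeas.norm.pow_const _).aestronglyMeasurable
      (Filter.Eventually.of_forall fun z => ?_) (g := fun z => (1 + 2 * C) ^ 4 * (1 + u z ^ s))
    rw [Real.norm_eq_abs, abs_of_nonneg (by positivity)]
    exact bh z
  have mY : Measurable (fun z => 1 - u z) := measurable_const.sub hum
  have iyp : Integrable (fun z => ‖1 - u z‖ ^ p) Q := by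
    refine (iW.const_mul _).mono' (mY.norm.pow_const _).aestronglyMeasurable
      (Filter.Eventually.of_forall fun z => ?_) (g := fun z => 32 * (1 + u z ^ s))
    rw [Real.norm_eq_abs, abs_of_nonneg (by positivity)]
    exact by1 z
  have y0 : ∫ z, (1 - u z) ∂Q = 0 := by
    rw [integral_sub (integrable_const _) iu, hu1]; simp
  have r1 := mz_bound Q _ hmeas hp hp4 ihp h0 ih n hn
  have r2 := mz_bound Q _ mY hp hp4 iyp y0 ((integrable_const _).sub iu) n hn
  have ey : ∀ zs : Fin n → 𝒵, ‖(n : ℝ)⁻¹ • ∑ k, (1 - u (zs k))‖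
      = |1 - (n : ℝ)⁻¹ * ∑ k, u (zs k)| := by
    intro zs
    rw [Real.norm_eq_abs, smul_eq_mul, Finset.sum_sub_distrib, mul_sub]
    simp [hn0.ne']
  simp only [ey] at r2
  have m1 : ∫ z, ‖g z - u z • G‖ ^ p ∂Q ≤ (1 + 2 * C) ^ 4 * (1 + ∫ z, u z ^ s ∂Q) := by
    rw [← hW, ← integral_const_mul]
    exact integral_mono ihp (iW.const_mul _) bh
  have m2 : ∫ z, ‖1 - u z‖ ^ p ∂Q ≤ 32 * (1 + ∫ z, u z ^ s ∂Q) := by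
    rw [← hW, ← integral_const_mul]
    exact integral_mono iyp (iW.const_mul _) by1
  have hmz : 0 ≤ mzC * (n : ℝ) ^ (-(p / 2)) := by unfold mzC; positivity
  have iev : ∀ k : Fin n, Integrable (fun zs : Fin n → 𝒵 => g (zs k) - u (zs k) • G)
      (Measure.pi fun _ => Q) := fun k =>
    (measurePreserving_eval (fun _ : Fin n => Q) k).integrable_comp_of_integrable ih
  refine ⟨r1.1.add r2.1, ?_, ?_, ?_, (integrable_finsetSum _ fun k _ => iev k).smul _⟩
  · rw [integral_add r1.1 r2.1]
    have a1 := r1.2.trans (mul_le_mul_of_nonneg_left m1 hmz)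
    have a2 := r2.2.trans (mul_le_mul_of_nonneg_left m2 hmz)
    linarith
  · intro zs
    rw [norm_smul, norm_inv, Real.norm_natCast]
    have : ‖∑ k, (g (zs k) - u (zs k) • G)‖ ≤ 2 * C * ∑ k, u (zs k) := by
      rw [Finset.mul_sum]
      exact norm_sum_le_of_le _ fun k _ => hh _
    calc _ ≤ (n : ℝ)⁻¹ * (2 * C * ∑ k, u (zs k)) := by gcongr
      _ = _ := by ring
  · rw [integral_smul, integral_finsetSum _ fun k _ => iev k]
    have : ∀ k : Fin n, ∫ zs : Fin n → 𝒵, (g (zs k) - u (zs k) • G) ∂(Measure.pi fun _ => Q) = 0 := by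
      intro k
      have mp := measurePreserving_eval (fun _ : Fin n => Q) k
      have := integral_map (μ := Measure.pi fun _ : Fin n => Q) mp.measurable.aemeasurable
        (f := fun z => g z - u z • G) hmeas.aestronglyMeasurable
      rw [mp.map_eq, h0] at this
      exact this.symm
    simp [this]

/-- constants -/
def kC (C : ℝ) : ℝ := (4 + 16 * (2 * C) ^ 2 + (1 + 2 * (2 * C))) * (mzC * ((1 + 2 * C) ^ 4 + 32))

lemma remT_meas {u : 𝒵 → ℝ} {g : 𝒵 → E} (hu : Measurable u) (hg : Measurable g) (G : E) (n : ℕ) :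
    Measurable (fun zs : Fin n → 𝒵 => remT u g G zs) := by
  refine ((rat_meas hu hg n).sub_const G).sub ?_
  refine Measurable.const_smul (Finset.measurable_sum _ fun k _ => ?_) _
  exact (hg.sub (hu.smul_const G)).comp (measurable_pi_apply k)

lemma fixed_T2 (Q : Measure 𝒵) [IsProbabilityMeasure Q] {u : 𝒵 → ℝ} {g : 𝒵 → E} {G : E}
    {C s p : ℝ} (hC : 0 ≤ C) (hum : Measurable u) (hgm : Measurable g) (hpos : ∀ z, 0 < u z)
    (hb : ∀ z, ‖g z‖ ≤ C * u z) (hu1 : ∫ z, u z ∂Q = 1) (hG : ∫ z, g z ∂Q = G)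
    (hus : Integrable (fun z => u z ^ s) Q) (hp : 2 ≤ p) (hp4 : p ≤ 4) (hps : p ≤ s)
    (n : ℕ) (hn : 1 ≤ n) :
    Integrable (fun zs : Fin n → 𝒵 => ‖remT u g G zs‖ ^ 2) (Measure.pi fun _ => Q) ∧
    ∫ zs : Fin n → 𝒵, ‖remT u g G zs‖ ^ 2 ∂(Measure.pi fun _ => Q) ≤
      kC C * (n : ℝ) ^ (-(p / 2)) * (1 + ∫ z, u z ^ s ∂Q) := by
  obtain ⟨h1, h2, h3, -, -⟩ := fixed_main Q hC hum hgm hpos hb hu1 hG hus hp hp4 hps n hn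
  have hn0 : (0 : ℝ) < n := by exact_mod_cast hn
  have : Nonempty (Fin n) := ⟨⟨0, hn⟩⟩
  have pt : ∀ zs : Fin n → 𝒵, ‖remT u g G zs‖ ^ 2 ≤ (4 + 16 * (2 * C) ^ 2) *
      (‖(n : ℝ)⁻¹ • ∑ k, (g (zs k) - u (zs k) • G)‖ ^ p
      + |1 - (n : ℝ)⁻¹ * ∑ k, u (zs k)| ^ p) := by
    intro zs
    rw [remT_norm hpos hn]
    have hS : 0 < ∑ k, u (zs k) := Finset.sum_pos (fun k _ => hpos _) Finset.univ_nonempty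
    exact aux_T2 (norm_nonneg _) (by positivity) (by positivity) (h3 zs) hp hp4
  have hi : Integrable (fun zs : Fin n → 𝒵 => ‖remT u g G zs‖ ^ 2) (Measure.pi fun _ => Q) := by
    refine (h1.const_mul (4 + 16 * (2 * C) ^ 2)).mono'
      ((remT_meas hum hgm G n).norm.pow_const 2).aestronglyMeasurable
      (Filter.Eventually.of_forall fun zs => ?_)
    rw [Real.norm_eq_abs, abs_of_nonneg (by positivity)]
    exact pt zs
  refine ⟨hi, (integral_mono hi (h1.const_mul _) pt).trans ?_⟩
  rw [integral_const_mul]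
  have hI : 0 ≤ ∫ z, u z ^ s ∂Q := integral_nonneg fun z => Real.rpow_nonneg (hpos z).le _
  have hm : 0 ≤ mzC := by unfold mzC; positivity
  calc _ ≤ (4 + 16 * (2 * C) ^ 2) *
        (mzC * ((1 + 2 * C) ^ 4 + 32) * (n : ℝ) ^ (-(p / 2)) * (1 + ∫ z, u z ^ s ∂Q)) := by gcongr
    _ ≤ (4 + 16 * (2 * C) ^ 2 + (1 + 2 * (2 * C))) *
        (mzC * ((1 + 2 * C) ^ 4 + 32) * (n : ℝ) ^ (-(p / 2)) * (1 + ∫ z, u z ^ s ∂Q)) := by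
        have : 4 + 16 * (2 * C) ^ 2 ≤ 4 + 16 * (2 * C) ^ 2 + (1 + 2 * (2 * C)) := by linarith
        exact mul_le_mul_of_nonneg_right this (by positivity)
    _ = _ := by unfold kC; ring

lemma fixed_bias (Q : Measure 𝒵) [IsProbabilityMeasure Q] {u : 𝒵 → ℝ} {g : 𝒵 → E} {G : E}
    {C s : ℝ} (hC : 0 ≤ C) (hum : Measurable u) (hgm : Measurable g) (hpos : ∀ z, 0 < u z)
    (hb : ∀ z, ‖g z‖ ≤ C * u z) (hu1 : ∫ z, u z ∂Q = 1) (hG : ∫ z, g z ∂Q = G)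
    (hus : Integrable (fun z => u z ^ s) Q) (hs : 2 ≤ s)
    (n : ℕ) (hn : 1 ≤ n) :
    ‖(∫ zs : Fin n → 𝒵, rat u g zs ∂(Measure.pi fun _ => Q)) - G‖ ≤
      kC C * (n : ℝ)⁻¹ * (1 + ∫ z, u z ^ s ∂Q) := by
  obtain ⟨h1, h2, h3, h4, h5⟩ := fixed_main Q hC hum hgm hpos hb hu1 hG hus le_rfl (by norm_num) hs n hn
  have hn0 : (0 : ℝ) < n := by exact_mod_cast hn
  have : Nonempty (Fin n) := ⟨⟨0, hn⟩⟩
  have pt : ∀ zs : Fin n → 𝒵, ‖remT u g G zs‖ ≤ (1 + 2 * (2 * C)) *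
      (‖(n : ℝ)⁻¹ • ∑ k, (g (zs k) - u (zs k) • G)‖ ^ (2:ℝ)
      + |1 - (n : ℝ)⁻¹ * ∑ k, u (zs k)| ^ (2:ℝ)) := by
    intro zs
    rw [remT_norm hpos hn, Real.rpow_two, Real.rpow_two]
    have hS : 0 < ∑ k, u (zs k) := Finset.sum_pos (fun k _ => hpos _) Finset.univ_nonempty
    exact aux_T1 (norm_nonneg _) (by positivity) (by positivity) (h3 zs)
  have ir : Integrable (fun zs : Fin n → 𝒵 => rat u g zs) (Measure.pi fun _ => Q) :=
    Integrable.of_bound (rat_meas hum hgm n).aestronglyMeasurable C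
      (Filter.Eventually.of_forall fun zs => rat_bound hC hpos hb zs)
  have e : (∫ zs : Fin n → 𝒵, rat u g zs ∂(Measure.pi fun _ => Q)) - G
      = ∫ zs : Fin n → 𝒵, remT u g G zs ∂(Measure.pi fun _ => Q) := by
    unfold remT
    have i6 : Integrable (fun zs : Fin n → 𝒵 => rat u g zs - G) (Measure.pi fun _ => Q) :=
      ir.sub (integrable_const _)
    rw [integral_sub i6 h5, h4, integral_sub ir (integrable_const _)]
    simp
  rw [e]
  refine (norm_integral_le_of_norm_le (h1.const_mul _) (Filter.Eventually.of_forall pt)).trans ?_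
  rw [integral_const_mul]
  have hI : 0 ≤ ∫ z, u z ^ s ∂Q := integral_nonneg fun z => Real.rpow_nonneg (hpos z).le _
  have hm : 0 ≤ mzC := by unfold mzC; positivity
  have e1 : (n : ℝ) ^ (-((2:ℝ) / 2)) = (n : ℝ)⁻¹ := by
    rw [div_self (by norm_num), Real.rpow_neg_one]
  rw [e1] at h2
  calc _ ≤ (1 + 2 * (2 * C)) *
        (mzC * ((1 + 2 * C) ^ 4 + 32) * (n : ℝ)⁻¹ * (1 + ∫ z, u z ^ s ∂Q)) := by gcongr
    _ ≤ (4 + 16 * (2 * C) ^ 2 + (1 + 2 * (2 * C))) *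
        (mzC * ((1 + 2 * C) ^ 4 + 32) * (n : ℝ)⁻¹ * (1 + ∫ z, u z ^ s ∂Q)) := by
        have : 1 + 2 * (2 * C) ≤ 4 + 16 * (2 * C) ^ 2 + (1 + 2 * (2 * C)) := by
          nlinarith [sq_nonneg C]
        exact mul_le_mul_of_nonneg_right this (by positivity)
    _ = _ := by unfold kC; ring

/-- coupled correction at fixed parameter -/
def gcor (u : 𝒵 → ℝ) (g : 𝒵 → E) (n : ℕ) (zs : Fin (2 * n) → 𝒵) : E :=
  rat u g zs
    - (2 : ℝ)⁻¹ • (rat u g (fun k : Fin n => zs ⟨k.1, by have := k.2; omega⟩)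
        + rat u g (fun k : Fin n => zs ⟨n + k.1, by have := k.2; omega⟩))

lemma gcor_meas {u : 𝒵 → ℝ} {g : 𝒵 → E} (hu : Measurable u) (hg : Measurable g) (n : ℕ) :
    Measurable (fun zs : Fin (2 * n) → 𝒵 => gcor u g n zs) := by
  refine (rat_meas hu hg _).sub (Measurable.const_smul (Measurable.add ?_ ?_) _)
  · exact (rat_meas hu hg n).comp (measurable_pi_lambda _ fun k => measurable_pi_apply _)
  · exact (rat_meas hu hg n).comp (measurable_pi_lambda _ fun k => measurable_pi_apply _)

lemma sum_two_mul (n : ℕ) (f : Fin (2 * n) → E) :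
    ∑ k, f k = ∑ k : Fin n, f ⟨k.1, by have := k.2; omega⟩
      + ∑ k : Fin n, f ⟨n + k.1, by have := k.2; omega⟩ := by
  have h : n + n = 2 * n := by ring
  rw [← (finCongr h).sum_comp, Fin.sum_univ_add]
  rfl

lemma gcor_eq (u : 𝒵 → ℝ) (g : 𝒵 → E) (G : E) (n : ℕ) (zs : Fin (2 * n) → 𝒵) :
    gcor u g n zs = remT u g G zs
      - (2 : ℝ)⁻¹ • (remT u g G (fun k : Fin n => zs ⟨k.1, by have := k.2; omega⟩)
        + remT u g G (fun k : Fin n => zs ⟨n + k.1, by have := k.2; omega⟩)) := by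
  unfold gcor remT
  rw [sum_two_mul n (fun k => g (zs k) - u (zs k) • G)]
  push_cast
  rw [mul_inv]
  module

lemma fixed_gcor (Q : Measure 𝒵) [IsProbabilityMeasure Q] {u : 𝒵 → ℝ} {g : 𝒵 → E} {G : E}
    {C s p : ℝ} (hC : 0 ≤ C) (hum : Measurable u) (hgm : Measurable g) (hpos : ∀ z, 0 < u z)
    (hb : ∀ z, ‖g z‖ ≤ C * u z) (hu1 : ∫ z, u z ∂Q = 1) (hG : ∫ z, g z ∂Q = G)
    (hus : Integrable (fun z => u z ^ s) Q) (hp : 2 ≤ p) (hp4 : p ≤ 4) (hps : p ≤ s)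
    (n : ℕ) (hn : 1 ≤ n) :
    Integrable (fun zs : Fin (2 * n) → 𝒵 => ‖gcor u g n zs‖ ^ 2) (Measure.pi fun _ => Q) ∧
    ∫ zs : Fin (2 * n) → 𝒵, ‖gcor u g n zs‖ ^ 2 ∂(Measure.pi fun _ => Q) ≤
      4 * kC C * (n : ℝ) ^ (-(p / 2)) * (1 + ∫ z, u z ^ s ∂Q) := by
  have hn0 : (0 : ℝ) < n := by exact_mod_cast hn
  obtain ⟨a1, a2⟩ := fixed_T2 Q hC hum hgm hpos hb hu1 hG hus hp hp4 hps n hn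
  obtain ⟨b1, b2⟩ := fixed_T2 Q hC hum hgm hpos hb hu1 hG hus hp hp4 hps (2 * n) (by omega)
  have mp1 := pi_reindex Q (fun k : Fin n => (⟨k.1, by have := k.2; omega⟩ : Fin (2 * n)))
    (fun a b h => by simpa [Fin.ext_iff] using h)
  have mp2 := pi_reindex Q (fun k : Fin n => (⟨n + k.1, by have := k.2; omega⟩ : Fin (2 * n)))
    (fun a b h => by simpa [Fin.ext_iff] using h)
  have c1 := mp1.integrable_comp_of_integrable a1
  have c2 := mp2.integrable_comp_of_integrable a1
  have mT : Measurable (fun zs : Fin n → 𝒵 => ‖remT u g G zs‖ ^ 2) :=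
    (remT_meas hum hgm G n).norm.pow_const 2
  have d1 := integral_map (μ := Measure.pi fun _ : Fin (2 * n) => Q) mp1.measurable.aemeasurable
    mT.aestronglyMeasurable
  have d2 := integral_map (μ := Measure.pi fun _ : Fin (2 * n) => Q) mp2.measurable.aemeasurable
    mT.aestronglyMeasurable
  rw [mp1.map_eq] at d1
  rw [mp2.map_eq] at d2
  simp only [Function.comp_def] at c1 c2
  have pt : ∀ zs : Fin (2 * n) → 𝒵, ‖gcor u g n zs‖ ^ 2 ≤ 2 * ‖remT u g G zs‖ ^ 2
      + (‖remT u g G (fun k : Fin n => zs ⟨k.1, by have := k.2; omega⟩)‖ ^ 2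
        + ‖remT u g G (fun k : Fin n => zs ⟨n + k.1, by have := k.2; omega⟩)‖ ^ 2) := by
    intro zs
    rw [gcor_eq u g G n zs]
    generalize remT u g G zs = A
    generalize remT u g G _ = B
    generalize remT u g G _ = D
    have h1 : ‖A - (2:ℝ)⁻¹ • (B + D)‖ ≤ ‖A‖ + 2⁻¹ * (‖B‖ + ‖D‖) := by
      refine (norm_sub_le _ _).trans ?_
      rw [norm_smul]
      have := norm_add_le B D
      norm_num
      linarith
    calc _ ≤ (‖A‖ + 2⁻¹ * (‖B‖ + ‖D‖)) ^ 2 := by gcongr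
      _ ≤ _ := by nlinarith [sq_nonneg (‖A‖ - 2⁻¹ * (‖B‖ + ‖D‖)), sq_nonneg (‖B‖ - ‖D‖)]
  have hi : Integrable (fun zs : Fin (2 * n) → 𝒵 => ‖gcor u g n zs‖ ^ 2) (Measure.pi fun _ => Q) := by
    refine ((b1.const_mul 2).fun_add (c1.fun_add c2)).mono'
      ((gcor_meas hum hgm n).norm.pow_const 2).aestronglyMeasurable
      (Filter.Eventually.of_forall fun zs => ?_)
    rw [Real.norm_eq_abs, abs_of_nonneg (by positivity)]
    exact pt zs
  refine ⟨hi, (integral_mono hi ((b1.const_mul 2).fun_add (c1.fun_add c2)) pt).trans ?_⟩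
  rw [integral_add (b1.const_mul 2) (c1.fun_add c2), integral_add c1 c2, integral_const_mul,
    ← d1, ← d2]
  have hI : 0 ≤ ∫ z, u z ^ s ∂Q := integral_nonneg fun z => Real.rpow_nonneg (hpos z).le _
  have hk : 0 ≤ kC C := by unfold kC mzC; positivity
  have hmono : ((2 * n : ℕ) : ℝ) ^ (-(p / 2)) ≤ (n : ℝ) ^ (-(p / 2)) := by
    refine Real.rpow_le_rpow_of_nonpos hn0 ?_ (by linarith)
    push_cast; linarith
  have b3 : kC C * ((2 * n : ℕ) : ℝ) ^ (-(p / 2)) * (1 + ∫ z, u z ^ s ∂Q) ≤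
      kC C * (n : ℝ) ^ (-(p / 2)) * (1 + ∫ z, u z ^ s ∂Q) := by gcongr
  linarith

end fixed

section outer
variable {Θ 𝒳 𝒵 : Type*} [MeasurableSpace Θ] [MeasurableSpace 𝒳] [MeasurableSpace 𝒵]

/-- kernel of `n` samples -/
def piK (Θ : Type*) [MeasurableSpace Θ] (q : Kernel 𝒳 𝒵) [IsMarkovKernel q] (n : ℕ) :
    Kernel (Θ × 𝒳) (Fin n → 𝒵) :=
  ⟨fun p => Measure.pi fun _ : Fin n => q p.2, (measurable_piK q n).comp measurable_snd⟩

lemma piK_apply (q : Kernel 𝒳 𝒵) [IsMarkovKernel q] (n : ℕ) (p : Θ × 𝒳) :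
    piK Θ q n p = Measure.pi fun _ : Fin n => q p.2 := rfl

instance (q : Kernel 𝒳 𝒵) [IsMarkovKernel q] (n : ℕ) : IsMarkovKernel (piK Θ q n) :=
  ⟨fun p => by rw [piK_apply]; infer_instance⟩

lemma jointExp_eq {E : Type*} [NormedAddCommGroup E] [NormedSpace ℝ E]
    (r : Measure Θ) [IsProbabilityMeasure r] (ν : Measure 𝒳) [IsProbabilityMeasure ν]
    (q : Kernel 𝒳 𝒵) [IsMarkovKernel q] (n : ℕ) (f : Θ → 𝒳 → (Fin n → 𝒵) → E)
    (hf : StronglyMeasurable (fun w : (Θ × 𝒳) × (Fin n → 𝒵) => f w.1.1 w.1.2 w.2)) (B : ℝ)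
    (hB : ∀ θ x zs, ‖f θ x zs‖ ≤ B) :
    Integrable (fun p : Θ × 𝒳 => ∫ zs, f p.1 p.2 zs ∂(Measure.pi fun _ : Fin n => q p.2))
      (r.prod ν) ∧
    jointExp3 r ν q n f
      = ∫ p : Θ × 𝒳, ∫ zs, f p.1 p.2 zs ∂(Measure.pi fun _ : Fin n => q p.2) ∂(r.prod ν) := by
  have h1 : StronglyMeasurable
      (fun p : Θ × 𝒳 => ∫ zs, f p.1 p.2 zs ∂(Measure.pi fun _ : Fin n => q p.2)) :=
    hf.integral_kernel_prod_right' (κ := piK Θ q n)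
  have h2 : Integrable (fun p : Θ × 𝒳 => ∫ zs, f p.1 p.2 zs ∂(Measure.pi fun _ : Fin n => q p.2))
      (r.prod ν) := by
    refine Integrable.of_bound h1.aestronglyMeasurable B (Filter.Eventually.of_forall fun p => ?_)
    refine (norm_integral_le_of_norm_le (integrable_const B)
      (Filter.Eventually.of_forall fun zs => hB _ _ _)).trans ?_
    simp
  exact ⟨h2, by rw [integral_prod _ h2]; rfl⟩

lemma euclid_norm_le {d : ℕ} (x : EuclideanSpace ℝ (Fin d)) (b : ℝ) (hb : 0 ≤ b)
    (h : ∀ i, |x i| ≤ b) : ‖x‖ ≤ d * b := by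
  rw [EuclideanSpace.norm_eq, Real.sqrt_le_iff]
  refine ⟨by positivity, ?_⟩
  calc ∑ i, ‖x i‖ ^ 2 ≤ ∑ _i : Fin d, b ^ 2 := by
        gcongr with i
        exact h i
    _ = d * b ^ 2 := by simp
    _ ≤ (d * b) ^ 2 := by
        rw [mul_pow]
        gcongr
        rcases Nat.eq_zero_or_pos d with h0 | h0
        · subst h0; simp
        · have : (1 : ℝ) ≤ d := by exact_mod_cast h0
          nlinarith

lemma rat_joint_meas {d : ℕ} {u : Θ → 𝒳 → 𝒵 → ℝ} {g : Θ → 𝒳 → 𝒵 → EuclideanSpace ℝ (Fin d)}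
    (hu : Measurable fun p : Θ × 𝒳 × 𝒵 => u p.1 p.2.1 p.2.2)
    (hg : Measurable fun p : Θ × 𝒳 × 𝒵 => g p.1 p.2.1 p.2.2) (n N : ℕ) (f : Fin n → Fin N) :
    Measurable (fun w : (Θ × 𝒳) × (Fin N → 𝒵) =>
      rat (u w.1.1 w.1.2) (g w.1.1 w.1.2) (fun k => w.2 (f k))) := by
  have hc : ∀ k, Measurable (fun w : (Θ × 𝒳) × (Fin N → 𝒵) => (w.1.1, w.1.2, w.2 (f k))) :=
    fun k => by fun_prop
  exact (Finset.measurable_sum _ fun k _ => hu.comp (hc k)).inv.smul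
    (Finset.measurable_sum _ fun k _ => hg.comp (hc k))

lemma gcor_bound {d : ℕ} {u : 𝒵 → ℝ} {g : 𝒵 → EuclideanSpace ℝ (Fin d)} {C : ℝ} (hC : 0 ≤ C)
    (hpos : ∀ z, 0 < u z) (hb : ∀ z, ‖g z‖ ≤ C * u z) (n : ℕ) (zs : Fin (2 * n) → 𝒵) :
    ‖gcor u g n zs‖ ≤ 2 * C := by
  unfold gcor
  refine (norm_sub_le _ _).trans ?_
  rw [norm_smul]
  have h1 := rat_bound hC hpos hb zs
  have h2 := rat_bound hC hpos hb (fun k : Fin n => zs ⟨k.1, by have := k.2; omega⟩)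
  have h3 := rat_bound hC hpos hb (fun k : Fin n => zs ⟨n + k.1, by have := k.2; omega⟩)
  have h4 := norm_add_le (rat u g (fun k : Fin n => zs ⟨k.1, by have := k.2; omega⟩))
    (rat u g (fun k : Fin n => zs ⟨n + k.1, by have := k.2; omega⟩))
  rw [show ‖(2:ℝ)⁻¹‖ = 2⁻¹ by norm_num]
  linarith

lemma gcor_joint_meas {d : ℕ} {u : Θ → 𝒳 → 𝒵 → ℝ}
    {g : Θ → 𝒳 → 𝒵 → EuclideanSpace ℝ (Fin d)}
    (hu : Measurable fun p : Θ × 𝒳 × 𝒵 => u p.1 p.2.1 p.2.2)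
    (hg : Measurable fun p : Θ × 𝒳 × 𝒵 => g p.1 p.2.1 p.2.2) (n : ℕ) :
    Measurable (fun w : (Θ × 𝒳) × (Fin (2 * n) → 𝒵) =>
      gcor (u w.1.1 w.1.2) (g w.1.1 w.1.2) n w.2) := by
  have m0 := rat_joint_meas hu hg (2 * n) (2 * n) id
  have m1 := rat_joint_meas hu hg n (2 * n)
    (fun k : Fin n => (⟨k.1, by have := k.2; omega⟩ : Fin (2 * n)))
  have m2 := rat_joint_meas hu hg n (2 * n)
    (fun k : Fin n => (⟨n + k.1, by have := k.2; omega⟩ : Fin (2 * n)))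
  have m3 := m0.sub ((m1.add m2).const_smul (2 : ℝ)⁻¹)
  unfold gcor
  exact m3

lemma gradCorr_eq {d : ℕ} (u : Θ → 𝒳 → 𝒵 → ℝ)
    (g : Θ → 𝒳 → 𝒵 → EuclideanSpace ℝ (Fin d)) (n : ℕ) :
    gradCorrection3 u g n = fun θ x zs => gcor (u θ x) (g θ x) n zs := rfl

/-- variance bound for general sample size -/
lemma outer_var {d : ℕ}
    (r : Measure Θ) [IsProbabilityMeasure r] (ν : Measure 𝒳) [IsProbabilityMeasure ν]
    (q : Kernel 𝒳 𝒵) [IsMarkovKernel q] (u : Θ → 𝒳 → 𝒵 → ℝ)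
    (g : Θ → 𝒳 → 𝒵 → EuclideanSpace ℝ (Fin d)) (n : ℕ)
    (hu : Measurable fun p : Θ × 𝒳 × 𝒵 => u p.1 p.2.1 p.2.2)
    (hg : Measurable fun p : Θ × 𝒳 × 𝒵 => g p.1 p.2.1 p.2.2) {C : ℝ} (hC : 0 ≤ C)
    (hpos : ∀ θ x z, 0 < u θ x z) (hb : ∀ θ x z, ‖g θ x z‖ ≤ C * u θ x z)
    (V : Θ × 𝒳 → ℝ) (hV : Integrable V (r.prod ν))
    (hVb : ∀ᵐ p ∂(r.prod ν), ∫ zs, ‖gcor (u p.1 p.2) (g p.1 p.2) n zs‖ ^ 2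
      ∂(Measure.pi fun _ : Fin (2 * n) => q p.2) ≤ V p)
    (b : ℝ) (hb0 : 0 < b) (hVI : ∫ p, V p ∂(r.prod ν) ≤ b ^ 2) :
    jointExp3 r ν q (2 * n) (fun θ x zs =>
            ‖gradCorrection3 u g n θ x zs
                - jointExp3 r ν q (2 * n) (gradCorrection3 u g n)‖ ^ 2) ≤ 4 * b ^ 2 := by
  have mg : Measurable (fun w : (Θ × 𝒳) × (Fin (2 * n) → 𝒵) =>
      gcor (u w.1.1 w.1.2) (g w.1.1 w.1.2) n w.2) := by
    exact gcor_joint_meas hu hg n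
  have bg : ∀ θ x (zs : Fin (2 * n) → 𝒵), ‖gcor (u θ x) (g θ x) n zs‖ ≤ 2 * C :=
    fun θ x zs => gcor_bound hC (hpos θ x) (hb θ x) n zs
  obtain ⟨i1, e1⟩ := jointExp_eq r ν q (2 * n) (fun θ x zs => gcor (u θ x) (g θ x) n zs)
    mg.stronglyMeasurable (2 * C) bg
  have mfix : ∀ p : Θ × 𝒳, Measurable (fun zs : Fin (2 * n) → 𝒵 => gcor (u p.1 p.2) (g p.1 p.2) n zs) :=
    fun p => gcor_meas (hu.comp ((by fun_prop : Measurable fun z : 𝒵 => (p.1, p.2, z))))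
      (hg.comp ((by fun_prop : Measurable fun z : 𝒵 => (p.1, p.2, z)))) n
  have isq : ∀ p : Θ × 𝒳, Integrable (fun zs : Fin (2 * n) → 𝒵 =>
      ‖gcor (u p.1 p.2) (g p.1 p.2) n zs‖ ^ 2) (Measure.pi fun _ : Fin (2 * n) => q p.2) := by
    intro p
    refine Integrable.of_bound ((mfix p).norm.pow_const 2).aestronglyMeasurable ((2 * C) ^ 2)
      (Filter.Eventually.of_forall fun zs => ?_)
    rw [Real.norm_eq_abs, abs_of_nonneg (by positivity)]
    have := bg p.1 p.2 zs
    gcongr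
  rw [gradCorr_eq]
  generalize jointExp3 r ν q (2 * n) (fun θ x zs => gcor (u θ x) (g θ x) n zs) = m at e1 ⊢
  have hm : ‖m‖ ≤ b := by
    rw [e1]
    refine (norm_integral_le_of_norm_le (((integrable_const (b / 2)).fun_add
      (hV.const_mul (2 * b)⁻¹))) ?_).trans ?_
    · filter_upwards [hVb] with p hp
      refine (norm_integral_le_of_norm_le ((integrable_const (b / 2)).fun_add
        ((isq p).const_mul (2 * b)⁻¹)) (Filter.Eventually.of_forall fun zs => ?_)).trans ?_
      · set t := ‖gcor (u p.1 p.2) (g p.1 p.2) n zs‖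
        have : b / 2 + (2 * b)⁻¹ * t ^ 2 - t = (2 * b)⁻¹ * (t - b) ^ 2 := by
          field_simp; ring
        have h2 : 0 ≤ (2 * b)⁻¹ * (t - b) ^ 2 := by positivity
        linarith
      · rw [integral_add (integrable_const _) ((isq p).const_mul _), integral_const_mul]
        simp only [integral_const, probReal_univ, one_smul]
        gcongr
    · rw [integral_add (integrable_const _) (hV.const_mul _), integral_const_mul]
      simp only [integral_const, probReal_univ, one_smul]
      calc b / 2 + (2 * b)⁻¹ * ∫ p, V p ∂(r.prod ν) ≤ b / 2 + (2 * b)⁻¹ * b ^ 2 := by gcongr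
        _ = b := by field_simp; ring
  obtain ⟨i2, e2⟩ := jointExp_eq r ν q (2 * n) (fun θ x zs => ‖gcor (u θ x) (g θ x) n zs - m‖ ^ 2)
    ((mg.sub_const m).norm.pow_const 2).stronglyMeasurable ((2 * C + ‖m‖) ^ 2) (by
      intro θ x zs
      rw [Real.norm_eq_abs, abs_of_nonneg (by positivity)]
      have := (norm_sub_le (gcor (u θ x) (g θ x) n zs) m).trans (add_le_add_left (bg θ x zs) _)
      gcongr)
  rw [e2]
  have hfin : ∫ p : Θ × 𝒳, (2 * V p + 2 * ‖m‖ ^ 2) ∂(r.prod ν) ≤ 4 * b ^ 2 := by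
    rw [integral_add (hV.const_mul _) (integrable_const _), integral_const_mul]
    simp only [integral_const, probReal_univ, one_smul]
    have : ‖m‖ ^ 2 ≤ b ^ 2 := by gcongr
    linarith
  refine le_trans (integral_mono_ae i2 ((hV.const_mul 2).fun_add (integrable_const (2 * ‖m‖ ^ 2))) ?_) hfin
  filter_upwards [hVb] with p hp
  have hpt : ∀ zs : Fin (2 * n) → 𝒵, ‖gcor (u p.1 p.2) (g p.1 p.2) n zs - m‖ ^ 2 ≤
      2 * ‖gcor (u p.1 p.2) (g p.1 p.2) n zs‖ ^ 2 + 2 * ‖m‖ ^ 2 := by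
    intro zs
    set A := gcor (u p.1 p.2) (g p.1 p.2) n zs
    calc ‖A - m‖ ^ 2 ≤ (‖A‖ + ‖m‖) ^ 2 := by
          have := norm_sub_le A m
          gcongr
      _ ≤ _ := by nlinarith [sq_nonneg (‖A‖ - ‖m‖)]
  refine (integral_mono_of_nonneg (Filter.Eventually.of_forall fun zs => by positivity)
    (((isq p).const_mul 2).fun_add (integrable_const (2 * ‖m‖ ^ 2)))
    (Filter.Eventually.of_forall hpt)).trans ?_
  rw [integral_add ((isq p).const_mul _) (integrable_const _), integral_const_mul]
  simp only [integral_const, probReal_univ, one_smul]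
  linarith

end outer

/-- **MLMC rates for the gradient of the locally marginalized evidence lower bound**
(appendix Theorem of the paper).  Let `(Θ, X) ~ r ⊗ ν` and, conditionally on `(Θ, X)`,
`Z₁, Z₂, …` i.i.d. `~ q(·; X)`; let `u > 0` be the normalized weight
(`∫ u q(dz;x) = 1` a.e.) and `g` the weighted gradient with `∫ g q(dz;x) = G(θ,x)` a.e.
If `E[u^s] < ∞` for some `s ≥ 2` and `sup ‖g/u‖_∞ < ∞`, then there is `c > 0` such that
the coupled gradient corrections satisfy `E[‖∇Δ_ℓ − E[∇Δ_ℓ]‖₂²] ≤ c·2^{−βℓ}` for `ℓ ≥ 1`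
with `β = min(s/2, 2)`, and the bias satisfies `‖E[Ĝ_{2^ℓ}] − E[G(Θ,X)]‖₂ ≤ c·2^{−αℓ}`
for `ℓ ≥ 0` with `α = min(s/2, 1)`. -/
theorem lmelbo_gradient_mlmc_rates
    {Θ 𝒳 𝒵 : Type*} [MeasurableSpace Θ] [MeasurableSpace 𝒳] [MeasurableSpace 𝒵] {d : ℕ}
    (r : Measure Θ) [IsProbabilityMeasure r]
    (ν : Measure 𝒳) [IsProbabilityMeasure ν]
    (q : Kernel 𝒳 𝒵) [IsMarkovKernel q]
    (u : Θ → 𝒳 → 𝒵 → ℝ)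
    (hu_meas : Measurable fun p : Θ × 𝒳 × 𝒵 => u p.1 p.2.1 p.2.2)
    (hu_pos : ∀ θ x z, 0 < u θ x z)
    (hu_norm : ∀ᵐ p ∂(r.prod ν), ∫ z, u p.1 p.2 z ∂(q p.2) = 1)
    (g : Θ → 𝒳 → 𝒵 → EuclideanSpace ℝ (Fin d))
    (hg_meas : Measurable fun p : Θ × 𝒳 × 𝒵 => g p.1 p.2.1 p.2.2)
    (G : Θ → 𝒳 → EuclideanSpace ℝ (Fin d))
    (hG : ∀ᵐ p ∂(r.prod ν), ∫ z, g p.1 p.2 z ∂(q p.2) = G p.1 p.2)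
    (s : ℝ) (hs : 2 ≤ s)
    (hus : (∫⁻ θ, ∫⁻ x, ∫⁻ z, ENNReal.ofReal (u θ x z ^ s) ∂(q x) ∂ν ∂r) < ⊤)
    (hsup : ∃ Csup : ℝ, ∀ θ x z i, |g θ x z i / u θ x z| ≤ Csup) :
    ∃ c > (0 : ℝ),
      (∀ ℓ : ℕ, 1 ≤ ℓ →
        jointExp3 r ν q (2 * 2 ^ (ℓ - 1)) (fun θ x zs =>
            ‖gradCorrection3 u g (2 ^ (ℓ - 1)) θ x zs
                - jointExp3 r ν q (2 * 2 ^ (ℓ - 1)) (gradCorrection3 u g (2 ^ (ℓ - 1)))‖ ^ 2)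
          ≤ c * (2 : ℝ) ^ (-(min (s / 2) 2) * ℓ)) ∧
      (∀ ℓ : ℕ,
        ‖jointExp3 r ν q (2 ^ ℓ) (fun θ x zs => ratioEstimator3 u g θ x zs)
            - ∫ p : Θ × 𝒳, G p.1 p.2 ∂(r.prod ν)‖
          ≤ c * (2 : ℝ) ^ (-(min (s / 2) 1) * ℓ)) := by
  obtain ⟨C0, hC0⟩ := hsup
  set C : ℝ := d * |C0| with hCdef
  have hC : 0 ≤ C := by positivity
  have hb : ∀ θ x z, ‖g θ x z‖ ≤ C * u θ x z := by
    intro θ x z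
    have hu := hu_pos θ x z
    have := euclid_norm_le (g θ x z) (|C0| * u θ x z) (by positivity) (fun i => by
      have h1 := (hC0 θ x z i).trans (le_abs_self C0)
      rwa [abs_div, abs_of_pos hu, div_le_iff₀ hu] at h1)
    rw [hCdef]; linarith
  have mfu : ∀ θ x, Measurable (u θ x) := fun θ x =>
    hu_meas.comp (measurable_prodMk_left.comp measurable_prodMk_left : Measurable fun z => (θ, x, z))
  have mfg : ∀ θ x, Measurable (g θ x) := fun θ x =>
    hg_meas.comp (measurable_prodMk_left.comp measurable_prodMk_left : Measurable fun z => (θ, x, z))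
  let qq : Kernel (Θ × 𝒳) 𝒵 := q.comap Prod.snd measurable_snd
  have mas : Measurable (fun w : (Θ × 𝒳) × 𝒵 => (w.1.1, w.1.2, w.2)) := by fun_prop
  have mus : Measurable (fun w : (Θ × 𝒳) × 𝒵 => u w.1.1 w.1.2 w.2 ^ s) :=
    (hu_meas.comp mas).pow_const s
  have mL : Measurable (fun p : Θ × 𝒳 => ∫⁻ z, ENNReal.ofReal (u p.1 p.2 z ^ s) ∂(q p.2)) :=
    (mus.ennreal_ofReal).lintegral_kernel_prod_right' (κ := qq)
  have hL : ∫⁻ p : Θ × 𝒳, ∫⁻ z, ENNReal.ofReal (u p.1 p.2 z ^ s) ∂(q p.2) ∂(r.prod ν) < ⊤ := by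
    rw [lintegral_prod _ mL.aemeasurable]; exact hus
  have aeI : ∀ᵐ p ∂(r.prod ν), Integrable (fun z => u p.1 p.2 z ^ s) (q p.2) := by
    filter_upwards [ae_lt_top mL hL.ne] with p hp
    refine ⟨((mfu p.1 p.2).pow_const s).aestronglyMeasurable, ?_⟩
    rw [hasFiniteIntegral_iff_ofReal (Filter.Eventually.of_forall fun z =>
      Real.rpow_nonneg (hu_pos _ _ z).le s)]
    exact hp
  have mI : StronglyMeasurable (fun p : Θ × 𝒳 => ∫ z, u p.1 p.2 z ^ s ∂(q p.2)) :=
    mus.stronglyMeasurable.integral_kernel_prod_right' (κ := qq)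
  have iI : Integrable (fun p : Θ × 𝒳 => ∫ z, u p.1 p.2 z ^ s ∂(q p.2)) (r.prod ν) := by
    refine ⟨mI.aestronglyMeasurable, lt_of_le_of_lt (lintegral_mono fun p => ?_) hL⟩
    refine (enorm_integral_le_lintegral_enorm _).trans (lintegral_mono fun z => ?_)
    rw [Real.enorm_eq_ofReal (Real.rpow_nonneg (hu_pos _ _ z).le s)]
  set W : Θ × 𝒳 → ℝ := fun p => 1 + ∫ z, u p.1 p.2 z ^ s ∂(q p.2) with hWdef
  have iW : Integrable W (r.prod ν) := (integrable_const 1).fun_add iI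
  have W1 : ∀ p, 1 ≤ W p := fun p => by
    have : 0 ≤ ∫ z, u p.1 p.2 z ^ s ∂(q p.2) :=
      integral_nonneg fun z => Real.rpow_nonneg (hu_pos _ _ z).le s
    simp only [hWdef]; linarith
  set I := ∫ p, W p ∂(r.prod ν) with hIdef
  have hI1 : 1 ≤ I := by
    have := integral_mono (integrable_const (1:ℝ)) iW W1
    simpa using this
  have hk : 0 < kC C := by unfold kC mzC; positivity
  refine ⟨64 * (kC C * I), by positivity, ?_, ?_⟩
  · intro ℓ hℓ
    set p := min s 4 with hp
    have hp2 : 2 ≤ p := le_min hs (by norm_num)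
    have hp4 : p ≤ 4 := min_le_right _ _
    have hps : p ≤ s := min_le_left _ _
    set n := 2 ^ (ℓ - 1) with hn
    have hn1 : 1 ≤ n := Nat.one_le_two_pow
    have hn0 : (0 : ℝ) < n := by exact_mod_cast hn1
    set t := 4 * kC C * (n : ℝ) ^ (-(p / 2)) with ht
    have ht0 : 0 < t := by positivity
    have key := outer_var r ν q u g n hu_meas hg_meas hC hu_pos hb (fun x => t * W x)
      (iW.const_mul t) (by
        filter_upwards [hu_norm, hG, aeI] with x h1 h2 h3
        exact (fixed_gcor (q x.2) hC (mfu _ _) (mfg _ _) (hu_pos _ _) (hb _ _) h1 h2 h3 hp2 hp4 hps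
          n hn1).2) (Real.sqrt (t * I)) (Real.sqrt_pos.2 (by positivity)) (by
        rw [Real.sq_sqrt (by positivity), integral_const_mul])
    rw [Real.sq_sqrt (by positivity)] at key
    refine key.trans ?_
    have hexp : (n : ℝ) ^ (-(p / 2)) ≤ 4 * (2 : ℝ) ^ (-(min (s / 2) 2) * ℓ) := by
      have e1 : min (s / 2) 2 = p / 2 := by
        rw [hp, min_div_div_right (by norm_num : (0:ℝ) ≤ 2) s 4 |>.symm]; norm_num
      have e2 : (n : ℝ) = (2 : ℝ) ^ ((ℓ : ℝ) - 1) := by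
        rw [hn, Nat.cast_pow, ← Real.rpow_natCast, Nat.cast_sub hℓ]; norm_num
      rw [e1, e2, ← Real.rpow_mul (by norm_num)]
      have e3 : (4 : ℝ) = 2 ^ (2 : ℝ) := by norm_num
      rw [e3, ← Real.rpow_add (by norm_num)]
      exact Real.rpow_le_rpow_of_exponent_le (by norm_num) (by nlinarith)
    calc 4 * (t * I) = 16 * (kC C * I) * (n : ℝ) ^ (-(p / 2)) := by rw [ht]; ring
      _ ≤ 16 * (kC C * I) * (4 * (2 : ℝ) ^ (-(min (s / 2) 2) * ℓ)) := by gcongr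
      _ = _ := by ring
  · intro ℓ
    set n := 2 ^ ℓ with hn
    have hn1 : 1 ≤ n := Nat.one_le_two_pow
    have hn0 : (0 : ℝ) < n := by exact_mod_cast hn1
    obtain ⟨i1, e1⟩ := jointExp_eq r ν q n (fun θ x zs => rat (u θ x) (g θ x) zs)
      (rat_joint_meas hu_meas hg_meas n n id).stronglyMeasurable C
      (fun θ x zs => rat_bound hC (hu_pos θ x) (hb θ x) zs)
    have mG : StronglyMeasurable (fun p : Θ × 𝒳 => ∫ z, g p.1 p.2 z ∂(q p.2)) :=
      (hg_meas.comp mas).stronglyMeasurable.integral_kernel_prod_right' (κ := qq)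
    have iG : Integrable (fun p : Θ × 𝒳 => G p.1 p.2) (r.prod ν) := by
      refine Integrable.of_bound (mG.aestronglyMeasurable.congr hG) C ?_
      filter_upwards [hu_norm, hG] with p h1 h2
      rw [← h2]
      refine (norm_integral_le_of_norm_le ((integrable_of_integral_eq_one h1).const_mul C)
        (Filter.Eventually.of_forall (hb p.1 p.2))).trans ?_
      rw [integral_const_mul, h1, mul_one]
    change ‖jointExp3 r ν q n (fun θ x zs => rat (u θ x) (g θ x) zs) - _‖ ≤ _
    rw [e1, ← integral_sub i1 iG]
    refine (norm_integral_le_of_norm_le (iW.const_mul (kC C * (n : ℝ)⁻¹)) ?_).trans ?_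
    · filter_upwards [hu_norm, hG, aeI] with x h1 h2 h3
      exact fixed_bias (q x.2) hC (mfu _ _) (mfg _ _) (hu_pos _ _) (hb _ _) h1 h2 h3 hs n hn1
    · rw [integral_const_mul, min_eq_right (by linarith)]
      have e2 : (2 : ℝ) ^ (-(1:ℝ) * ℓ) = (n : ℝ)⁻¹ := by
        rw [neg_mul, one_mul, Real.rpow_neg (by norm_num), Real.rpow_natCast, hn]; push_cast; rfl
      rw [e2]
      have : 0 ≤ kC C * I * (n : ℝ)⁻¹ := by positivity
      calc kC C * (n : ℝ)⁻¹ * I = kC C * I * (n : ℝ)⁻¹ := by ring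
        _ ≤ _ := by linarith
end
end
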